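/- arXiv:2504.21542 — 4 statements merged into one kernel-verified Lean document; each statement's English description precedes it below -/
import Mathlib

section
/- Let G be a group that is an extension of a free group by a finite p-group (i.e., G has a normal free subgroup N with G/N a finite p-group). Then G is residually a finite p-group. -/
def ResiduallyFiniteP (p : ℕ) (G : Type*) [Group G] : Prop :=
  ∀ g : G, g ≠ 1 → ∃ M : Subgroup G, M.Normal ∧ (∃ k : ℕ, M.index = p ^ k) ∧ g ∉ M

open Matrix

/-- strictly upper triangular matrices, as an additive subgroup -/
def strictUpper (n : ℕ) (R : Type) [CommRing R] : AddSubgroup (Matrix (Fin n) (Fin n) R) where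
  carrier := {X | ∀ i j, j ≤ i → X i j = 0}
  zero_mem' := by intro i j _; rfl
  add_mem' := by
    intro a b ha hb i j h
    simp [ha i j h, hb i j h]
  neg_mem' := by
    intro a ha i j h
    simp [ha i j h]

theorem strictUpper_mul {n : ℕ} {R : Type} [CommRing R] {X Y : Matrix (Fin n) (Fin n) R}
    (hX : X ∈ strictUpper n R) (hY : Y ∈ strictUpper n R) : X * Y ∈ strictUpper n R := by
  intro i j h
  rw [Matrix.mul_apply]
  apply Finset.sum_eq_zero
  intro k _
  rcases le_or_gt k i with hk | hk
  · rw [hX i k hk, zero_mul]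
  · rw [hY k j (h.trans hk.le), mul_zero]

theorem strictUpper_unit {n : ℕ} {R : Type} [CommRing R] {X : Matrix (Fin n) (Fin n) R}
    (hX : X ∈ strictUpper n R) : IsUnit (1 + X) := by
  rw [Matrix.isUnit_iff_isUnit_det, Matrix.det_of_isUpperTriangular]
  · have : ∀ i, (1 + X) i i = 1 := fun i => by simp [hX i i le_rfl]
    simp [this]
  · intro i j h
    have h' : j < i := h
    simp [hX i j h'.le, Matrix.one_apply_ne h'.ne']

/-- the unitriangular group -/
def uniTri (n : ℕ) (R : Type) [CommRing R] [Finite R] :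
    Subgroup (Matrix (Fin n) (Fin n) R)ˣ :=
  let S : Submonoid (Matrix (Fin n) (Fin n) R)ˣ :=
    { carrier := {u | (u : Matrix (Fin n) (Fin n) R) - 1 ∈ strictUpper n R}
      one_mem' := by simp [zero_mem]
      mul_mem' := by
        intro a b ha hb
        have : ((a * b : (Matrix (Fin n) (Fin n) R)ˣ) : Matrix (Fin n) (Fin n) R) - 1 =
          (a.val - 1) * (b.val - 1) + (a.val - 1) + (b.val - 1) := by
          rw [Units.val_mul]; noncomm_ring
        change _ ∈ strictUpper n R
        rw [this]
        exact add_mem (add_mem (strictUpper_mul ha hb) ha) hb }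
  { S with
    inv_mem' := by
      intro u hu
      have h : u⁻¹ = u ^ (orderOf u - 1) := by
        apply inv_eq_of_mul_eq_one_right
        rw [← pow_succ', Nat.sub_add_cancel (orderOf_pos u), pow_orderOf_eq_one]
      change u⁻¹ ∈ S
      rw [h]
      exact S.pow_mem hu _ }

theorem mem_uniTri {n : ℕ} {R : Type} [CommRing R] [Finite R]
    {u : (Matrix (Fin n) (Fin n) R)ˣ} :
    u ∈ uniTri n R ↔ (u : Matrix (Fin n) (Fin n) R) - 1 ∈ strictUpper n R := Iff.rfl

theorem card_uniTri (n : ℕ) (R : Type) [CommRing R] [Finite R] :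
    Nat.card (uniTri n R) ∣ Nat.card R ^ (n * n) := by
  have e : Nat.card (uniTri n R) = Nat.card (strictUpper n R) := by
    refine Nat.card_eq_of_bijective
      (fun u => (⟨u.1.val - 1, mem_uniTri.1 u.2⟩ : strictUpper n R)) ⟨?_, ?_⟩
    · intro u v h
      have := congrArg Subtype.val h
      simp only [sub_left_inj] at this
      exact Subtype.ext (Units.ext this)
    · rintro ⟨X, hX⟩
      obtain ⟨u, hu⟩ := strictUpper_unit hX
      refine ⟨⟨u, mem_uniTri.2 ?_⟩, ?_⟩
      · rw [hu]; simpa using hX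
      · apply Subtype.ext; simp [hu]
  rw [e]
  have h := AddSubgroup.card_addSubgroup_dvd_card (strictUpper n R)
  have h2 : Nat.card (Matrix (Fin n) (Fin n) R) = Nat.card R ^ (n * n) := by
    unfold Matrix
    simp [Nat.card_fun, pow_mul]
  rwa [h2] at h

theorem band_zero {n : ℕ} {R β : Type*} [CommRing R] (f : β → Matrix (Fin n) (Fin n) R)
    (hf : ∀ b i j, i.val + 1 < j.val → f b i j = 0) (l : List β) (i j : Fin n)
    (h : i.val + l.length < j.val) : (l.map f).prod i j = 0 := by
  induction l generalizing i with
  | nil =>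
    simp only [List.map_nil, List.prod_nil]
    apply Matrix.one_apply_ne
    intro h'; subst h'; simp at h
  | cons b l ih =>
    simp only [List.map_cons, List.prod_cons, Matrix.mul_apply]
    apply Finset.sum_eq_zero
    intro k _
    simp only [List.length_cons] at h
    rcases lt_or_ge (i.val + 1) k.val with hk | hk
    · rw [hf b i k hk, zero_mul]
    · rw [ih k (by omega), mul_zero]

theorem band_prod {n : ℕ} {R β : Type*} [CommRing R]
    (f : β → Matrix (Fin n) (Fin n) R) (c : β → R)
    (hf : ∀ b i j, i.val + 1 < j.val → f b i j = 0)
    (l : List β) (i j : Fin n)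
    (hij : i.val + l.length = j.val)
    (hc : ∀ t (ht : t < l.length) (u v : Fin n), u.val = i.val + t → v.val = i.val + t + 1 →
      f l[t] u v = c l[t]) : (l.map f).prod i j = (l.map c).prod := by
  induction l generalizing i with
  | nil =>
    have : i = j := Fin.ext (by simpa using hij)
    simp [this]
  | cons b l ih =>
    simp only [List.map_cons, List.prod_cons, Matrix.mul_apply]
    simp only [List.length_cons] at hij
    let i' : Fin n := ⟨i.val + 1, by omega⟩
    have hi' : i'.val = i.val + 1 := rfl
    rw [Finset.sum_eq_single i']
    · rw [ih i' (by omega)]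
      · have := hc 0 (by simp) i i' (by simp) (by simp [hi'])
        simp only [List.getElem_cons_zero] at this
        rw [this]
      · intro t ht u v hu hv
        have := hc (t + 1) (by simp [ht]) u v (by omega) (by omega)
        simpa using this
    · intro k _ hk
      have hk' : k.val ≠ i.val + 1 := fun h => hk (Fin.ext h)
      rcases lt_or_ge (i.val + 1) k.val with h | h
      · rw [hf b i k h, zero_mul]
      · rw [band_zero f hf l k j (by omega), mul_zero]
    · simp

/-- step matrix -/
noncomputable def stepMat {α : Type*} (L : List α) (R : Type) [CommRing R] (a : α) :
    Matrix (Fin (L.length + 1)) (Fin (L.length + 1)) R :=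
  open Classical in fun i j => if j.val = i.val + 1 ∧ L[i.val]? = some a then 1 else 0

theorem stepMat_strict {α : Type*} (L : List α) (R : Type) [CommRing R] (a : α) :
    stepMat L R a ∈ strictUpper _ R := by
  intro i j h
  have h' : j.val ≤ i.val := h
  unfold stepMat
  rw [if_neg]
  omega

theorem stepMat_sq {α : Type*} (L : List α) (hL : L.IsChain (· ≠ ·))
    (R : Type) [CommRing R] (a : α) : stepMat L R a * stepMat L R a = 0 := by
  ext i j
  rw [Matrix.mul_apply]
  apply Finset.sum_eq_zero
  intro k _
  unfold stepMat
  by_cases h1 : k.val = i.val + 1 ∧ L[i.val]? = some a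
  · by_cases h2 : j.val = k.val + 1 ∧ L[k.val]? = some a
    · exfalso
      obtain ⟨h1, h1'⟩ := h1
      obtain ⟨h2, h2'⟩ := h2
      rw [h1] at h2'
      rw [List.getElem?_eq_some_iff] at h1' h2'
      obtain ⟨x, hx⟩ := h1'
      obtain ⟨y, hy⟩ := h2'
      rw [List.isChain_iff_getElem] at hL
      exact hL i.val y (hx.trans hy.symm)
    · rw [if_neg h2, mul_zero]
  · rw [if_neg h1, zero_mul]

/-- the homomorphism `e ↦ 1 + e A` for a square-zero matrix -/
def sqZeroHom {n : ℕ} {R : Type} [CommRing R] [Finite R] (A : Matrix (Fin n) (Fin n) R)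
    (hA : A ∈ strictUpper n R) (h : A * A = 0) : Multiplicative ℤ →* uniTri n R where
  toFun e := ⟨⟨1 + e.toAdd • A, 1 - e.toAdd • A, by
      simp only [mul_sub, add_mul, smul_mul_assoc, mul_smul_comm, h, smul_zero, mul_one, one_mul]
      abel_nf, by
      simp only [sub_mul, mul_add, smul_mul_assoc, mul_smul_comm, h, smul_zero, mul_one, one_mul]
      abel_nf⟩, by
      rw [mem_uniTri]
      simpa using zsmul_mem hA _⟩
  map_one' := by
    apply Subtype.ext; apply Units.ext; simp
  map_mul' x y := by
    apply Subtype.ext; apply Units.ext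
    simp only [toAdd_mul, Subgroup.coe_mul, Units.val_mul, mul_add, add_mul, smul_mul_assoc,
      mul_smul_comm, h, add_smul, smul_zero, mul_one, one_mul]
    abel_nf

theorem coprod_resid (p : ℕ) (hp : p.Prime) {α : Type*}
    (x : Monoid.CoprodI (fun _ : α => Multiplicative ℤ)) (hx : x ≠ 1) :
    ∃ (n : ℕ) (R : Type) (_ : CommRing R) (_ : Finite R)
      (φ : Monoid.CoprodI (fun _ : α => Multiplicative ℤ) →* uniTri n R),
      φ x ≠ 1 ∧ ∃ k, Nat.card R = p ^ k := by
  classical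
  obtain ⟨w, rfl⟩ := (Monoid.CoprodI.Word.equiv (M := fun _ : α => Multiplicative ℤ)).symm.surjective x
  change w.prod ≠ 1 at hx
  change ∃ (n : ℕ) (R : Type) (_ : CommRing R) (_ : Finite R)
      (φ : Monoid.CoprodI (fun _ : α => Multiplicative ℤ) →* uniTri n R),
      φ w.prod ≠ 1 ∧ ∃ k, Nat.card R = p ^ k
  let c : (Σ _ : α, Multiplicative ℤ) → ℤ := fun b => b.2.toAdd
  let P : ℤ := (w.toList.map c).prod
  have hP : P ≠ 0 := by
    apply List.prod_ne_zero
    intro h0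
    obtain ⟨b, hb, hb0⟩ := List.mem_map.1 h0
    exact w.ne_one b hb hb0
  let m := P.natAbs
  have hm : P.natAbs < p ^ m := Nat.lt_pow_self hp.one_lt
  have : NeZero (p ^ m) := ⟨(pow_pos hp.pos m).ne'⟩
  let R := ZMod (p ^ m)
  have hPR : (P : R) ≠ 0 := by
    intro h
    rw [ZMod.intCast_zmod_eq_zero_iff_dvd] at h
    have := Int.natAbs_dvd_natAbs.2 h
    rw [Int.natAbs_natCast] at this
    exact absurd (Nat.le_of_dvd (Int.natAbs_pos.2 hP) this) (not_le.2 hm)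
  let L : List α := w.toList.map Sigma.fst
  have hL : L.IsChain (· ≠ ·) := by
    rw [List.isChain_map]
    exact w.chain_ne
  have hlen : L.length = w.toList.length := by simp [L]
  let ψ : α → (Multiplicative ℤ →* uniTri (L.length + 1) R) := fun a =>
    sqZeroHom (stepMat L R a) (stepMat_strict L R a) (stepMat_sq L hL R a)
  let φ := Monoid.CoprodI.lift ψ
  refine ⟨L.length + 1, R, inferInstance, inferInstanceAs (Finite (ZMod (p ^ m))), φ, ?_, m, ?_⟩
  swap
  · exact Nat.card_zmod _
  intro h1
  let f : (Σ _ : α, Multiplicative ℤ) → Matrix (Fin (L.length + 1)) (Fin (L.length + 1)) R :=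
    fun b => 1 + c b • stepMat L R b.1
  have hval : ((φ w.prod).1.val) = (w.toList.map f).prod := by
    have : ∀ l : List (Σ _ : α, Multiplicative ℤ),
      ((φ (l.map fun b => (Monoid.CoprodI.of (i := b.1) b.2 :
        Monoid.CoprodI (fun _ : α => Multiplicative ℤ))).prod).1.val) = (l.map f).prod := by
      intro l
      induction l with
      | nil => simp
      | cons b l ih =>
        simp only [List.map_cons, List.prod_cons, map_mul, Subgroup.coe_mul, Units.val_mul, ih]
        have h5 : φ (Monoid.CoprodI.of (i := b.1) b.2) = ψ b.1 b.2 :=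
          Monoid.CoprodI.lift_of ψ b.2
        rw [h5]
        rfl
    exact this w.toList
  have key := band_prod f (fun b => (c b : R)) ?_ w.toList 0 (Fin.last _) (by simp [hlen]) ?_
  · rw [← hval, h1] at key
    have h2 : (w.toList.map fun b => (c b : R)).prod = (P : R) := by
      simp [P, Function.comp_def]
    rw [h2] at key
    apply hPR
    rw [← key]
    apply Matrix.one_apply_ne
    intro h3
    have h4 : w.toList = [] := by
      have := congrArg Fin.val h3
      have h6 : w.toList.length = 0 := by
        rw [← hlen]
        exact this.symm
      exact List.length_eq_zero_iff.1 h6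
    apply hx
    simp [Monoid.CoprodI.Word.prod, h4]
  · intro b i j hij
    have h7 : i ≠ j := by
      intro h; subst h; omega
    have h8 : stepMat L R b.1 i j = 0 := by
      unfold stepMat
      rw [if_neg]
      omega
    simp only [f, Matrix.add_apply, Matrix.smul_apply, h8, Matrix.one_apply_ne h7, smul_zero,
      add_zero]
  · intro t ht u v hu hv
    have hu' : u.val = t := by simpa using hu
    have hv' : v.val = t + 1 := by simpa using hv
    have h7 : u ≠ v := by
      intro h; subst h; omega
    have h8 : stepMat L R w.toList[t].1 u v = 1 := by
      unfold stepMat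
      rw [if_pos]
      refine ⟨by omega, ?_⟩
      rw [hu']
      simp [L, ht]
    simp only [f, Matrix.add_apply, Matrix.smul_apply, h8, Matrix.one_apply_ne h7, zero_add]
    simp

theorem free_resid (p : ℕ) (hp : p.Prime) {α : Type*} (g : FreeGroup α) (hg : g ≠ 1) :
    ∃ M : Subgroup (FreeGroup α), M.Normal ∧ (∃ k : ℕ, M.index = p ^ k) ∧ g ∉ M := by
  let F : FreeGroup α →* Monoid.CoprodI (fun _ : α => Multiplicative ℤ) :=
    FreeGroup.lift fun a => Monoid.CoprodI.of (i := a) (Multiplicative.ofAdd (1 : ℤ))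
  let K : Monoid.CoprodI (fun _ : α => Multiplicative ℤ) →* FreeGroup α :=
    Monoid.CoprodI.lift fun a => zpowersHom _ (FreeGroup.of a)
  have hKF : K.comp F = MonoidHom.id _ := by
    ext a
    simp [K, F]
  have hFg : F g ≠ 1 := by
    intro h
    have := DFunLike.congr_fun hKF g
    simp [h] at this
    exact hg this.symm
  obtain ⟨n, R, _, _, φ, h1, k, hk⟩ := coprod_resid p hp (F g) hFg
  refine ⟨(φ.comp F).ker, inferInstance, ?_, ?_⟩
  · rw [Subgroup.index_ker]
    have := (Subgroup.card_subgroup_dvd_card (φ.comp F).range).trans (card_uniTri n R)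
    rw [hk, ← pow_mul] at this
    obtain ⟨j, _, hj⟩ := (Nat.dvd_prime_pow hp).1 this
    exact ⟨j, hj⟩
  · exact h1

theorem stmt_8 (p : ℕ) (hp : p.Prime) (G : Type*) [Group G]
    (N : Subgroup G) (hN : N.Normal) (hfree : IsFreeGroup N)
    (hfin : Finite (G ⧸ N)) (hp' : IsPGroup p (G ⧸ N)) :
    ResiduallyFiniteP p G := by
  have : Fact p.Prime := ⟨hp⟩
  intro g hg
  by_cases hgN : g ∈ N
  swap
  · obtain ⟨k, hk⟩ := IsPGroup.iff_card.1 hp'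
    exact ⟨N, hN, ⟨k, hk⟩, hgN⟩
  let e := IsFreeGroup.toFreeGroup N
  obtain ⟨M, hM, ⟨k, hk⟩, hgM⟩ := free_resid p hp (e ⟨g, hgN⟩) (by
    intro h
    rw [map_eq_one_iff e e.injective] at h
    exact hg (congrArg Subtype.val h))
  let M₁ : Subgroup N := M.comap e.toMonoidHom
  have hM₁ : M₁.Normal := hM.comap _
  have hk₁ : M₁.index = p ^ k := by
    rw [← hk]; exact Subgroup.index_comap_of_surjective _ e.surjective
  let M₂ : Subgroup G := M₁.map N.subtype
  have hk₂ : M₂.index = p ^ k * N.index := by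
    rw [Subgroup.index_map_subtype, hk₁]
  have : M₂.FiniteIndex := ⟨by
    rw [hk₂]
    exact mul_ne_zero (pow_pos hp.pos k).ne' Nat.card_pos.ne'⟩
  have hpg : IsPGroup p (G ⧸ M₂.normalCore) := by
    intro q
    obtain ⟨x, rfl⟩ := QuotientGroup.mk_surjective q
    obtain ⟨a, ha⟩ := hp' (x : G ⧸ N)
    refine ⟨a + k, ?_⟩
    rw [← QuotientGroup.mk_pow, QuotientGroup.eq_one_iff] at ha ⊢
    rw [pow_add, pow_mul]
    intro b
    rw [← conj_pow]
    have hy := hN.conj_mem _ ha b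
    have hz : (⟨_, hy⟩ : N) ^ (p ^ k) ∈ M₁ := by
      rw [← hk₁]; exact Subgroup.pow_index_mem M₁ _
    exact ⟨_, hz, rfl⟩
  obtain ⟨j, hj⟩ := IsPGroup.iff_card.1 hpg
  refine ⟨M₂.normalCore, inferInstance, ⟨j, hj⟩, fun h => ?_⟩
  obtain ⟨⟨y, hy⟩, hyM, hyg⟩ := Subgroup.normalCore_le _ h
  change y = g at hyg
  subst hyg
  exact hgM hyM
end

section
/- Let K be a finite p-group and φᵢ: Aᵢ → Bᵢ isomorphisms between subgroups of K for i = 1,…,n, and let G be the multiple HNN-extension G = ⟨K, t₁,…,tₙ | tᵢ a tᵢ⁻¹ = φᵢ(a) for all a ∈ Aᵢ⟩. If each φᵢ extends to an automorphism θᵢ of K such that ⟨θ₁,…,θₙ⟩ ≤ Aut(K) is a finite p-group, then G is residually a finite p-group. -/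
theorem aux_pow {R : Type*} [Ring R] (p : ℕ) (hp : p.Prime) (N : R) (k m : ℕ) (hN : N ^ k = 0)
    (hm : (p : R) ^ m = 0) : ∃ M : ℕ, (1 + N) ^ p ^ M = 1 := by
  have := Fact.mk hp
  have h1 : ((p : ℕ) : Polynomial ℤ) ∣
      (1 + Polynomial.X) ^ p ^ k - (1 + Polynomial.X ^ p ^ k) := by
    obtain ⟨r, hr⟩ := exists_add_pow_prime_pow_eq hp (1 : Polynomial ℤ) Polynomial.X k
    rw [hr]
    refine ⟨Polynomial.X * r, ?_⟩
    ring
  have h2 := dvd_sub_pow_of_dvd_sub h1 m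
  obtain ⟨q, hq⟩ := h2
  have h3 := congrArg (Polynomial.aeval N) hq
  simp only [map_sub, map_pow, map_mul, map_add, map_one, Polynomial.aeval_X, map_natCast] at h3
  have h4 : N ^ p ^ k = 0 := pow_eq_zero_of_le (Nat.lt_pow_self hp.one_lt).le hN
  rw [h4, pow_succ, hm, add_zero, one_pow, zero_mul, zero_mul, sub_eq_zero, ← pow_mul, ← pow_add] at h3
  exact ⟨_, h3⟩

def utGroup (R : Type) [CommRing R] [Finite R] (n : ℕ) : Subgroup (Matrix (Fin n) (Fin n) R)ˣ :=
  let S : Submonoid (Matrix (Fin n) (Fin n) R)ˣ :=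
    { carrier := {u | ∀ i j, j ≤ i → (u.val - 1) i j = 0}
      one_mem' := by intro i j _; simp
      mul_mem' := by
        intro u v hu hv i j hij
        have : ((u * v).val - 1 : Matrix (Fin n) (Fin n) R)
          = (u.val - 1) * (v.val - 1) + (u.val - 1) + (v.val - 1) := by
          rw [Units.val_mul]; noncomm_ring
        rw [this, Matrix.add_apply, Matrix.add_apply, hu i j hij, hv i j hij, Matrix.mul_apply]
        simp only [add_zero]
        apply Finset.sum_eq_zero
        intro c _
        by_cases hc : c ≤ i
        · rw [hu i c hc, zero_mul]
        · rw [hv c j (hij.trans (not_le.mp hc).le), mul_zero] }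
  { S with
    inv_mem' := by
      intro u hu
      have hf : IsOfFinOrder u := isOfFinOrder_of_finite u
      have : u⁻¹ = u ^ (orderOf u - 1) := by
        rw [inv_eq_iff_mul_eq_one, ← pow_succ', Nat.sub_add_cancel hf.orderOf_pos,
          pow_orderOf_eq_one]
      rw [this]
      exact S.pow_mem hu _ }

theorem mem_utGroup {R : Type} [CommRing R] [Finite R] {n : ℕ} {u : (Matrix (Fin n) (Fin n) R)ˣ} :
    u ∈ utGroup R n ↔ ∀ i j, j ≤ i → (u.val - 1) i j = 0 := Iff.rfl

theorem utGroup_isPGroup (p : ℕ) (hp : p.Prime) (R : Type) [CommRing R] [Finite R] (m : ℕ)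
    (hm : (p : R) ^ m = 0) (n : ℕ) : IsPGroup p (utGroup R n) := by
  rintro ⟨u, hu⟩
  rw [mem_utGroup] at hu
  have key : ∀ k : ℕ, ∀ i j : Fin n, (j : ℕ) < i + k → ((u.val - 1) ^ k) i j = 0 := by
    intro k
    induction k with
    | zero => intro i j h; simp only [pow_zero]; rw [Matrix.one_apply_ne]; rintro rfl; omega
    | succ k ih =>
      intro i j h
      rw [pow_succ, Matrix.mul_apply]
      apply Finset.sum_eq_zero
      intro c _
      by_cases hc : (c : ℕ) < i + k
      · rw [ih i c hc, zero_mul]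
      · rw [hu c j (by rw [Fin.le_def]; omega), mul_zero]
  have hN : (u.val - 1) ^ n = 0 := by
    ext i j
    exact key n i j (by omega)
  have hm' : ((p : ℕ) : Matrix (Fin n) (Fin n) R) ^ m = 0 := by
    have := congrArg (algebraMap R (Matrix (Fin n) (Fin n) R)) hm
    simpa using this
  obtain ⟨M, hM⟩ := aux_pow p hp _ n m hN hm'
  refine ⟨M, ?_⟩
  ext1; ext1
  simpa using hM

theorem syllables {E : Type} (w : FreeGroup E) : ∃ l : List (E × ℤ), (∀ s ∈ l, s.2 ≠ 0) ∧
    l.IsChain (fun s t => s.1 ≠ t.1) ∧ w = (l.map fun s => FreeGroup.of s.1 ^ s.2).prod := by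
  classical
  have step : ∀ (a : E) (e : ℤ) (he : e ≠ 0) (w : FreeGroup E),
      (∃ l : List (E × ℤ), (∀ s ∈ l, s.2 ≠ 0) ∧
        l.IsChain (fun s t => s.1 ≠ t.1) ∧ w = (l.map fun s => FreeGroup.of s.1 ^ s.2).prod) →
      (∃ l : List (E × ℤ), (∀ s ∈ l, s.2 ≠ 0) ∧
        l.IsChain (fun s t => s.1 ≠ t.1) ∧
        FreeGroup.of a ^ e * w = (l.map fun s => FreeGroup.of s.1 ^ s.2).prod) := by
    rintro a e he w ⟨l, h0, hc, rfl⟩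
    cases l with
    | nil => exact ⟨[(a, e)], by simpa using he, by simp, by simp⟩
    | cons s l =>
      obtain ⟨b, n⟩ := s
      by_cases hab : a = b
      · subst hab
        by_cases hn : e + n = 0
        · refine ⟨l, fun s hs => h0 s (by simp [hs]), hc.tail, ?_⟩
          simp [← mul_assoc, ← zpow_add, hn]
        · refine ⟨(a, e + n) :: l, ?_, ?_, ?_⟩
          · intro s hs
            rcases List.mem_cons.mp hs with rfl | hs
            · exact hn
            · exact h0 s (by simp [hs])
          · rw [List.isChain_cons] at hc ⊢
            exact hc
          · simp [← mul_assoc, ← zpow_add]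
      · refine ⟨(a, e) :: (b, n) :: l, ?_, ?_, by simp⟩
        · intro s hs
          rcases List.mem_cons.mp hs with rfl | hs
          · exact he
          · exact h0 s hs
        · exact List.isChain_cons_cons.mpr ⟨hab, hc⟩
  have hlist : ∀ L : List (E × Bool), ∃ l : List (E × ℤ), (∀ s ∈ l, s.2 ≠ 0) ∧
      l.IsChain (fun s t => s.1 ≠ t.1) ∧
      FreeGroup.mk L = (l.map fun s => FreeGroup.of s.1 ^ s.2).prod := by
    intro L
    induction L with
    | nil => exact ⟨[], by simp, by simp, rfl⟩
    | cons x L ih =>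
      obtain ⟨a, b⟩ := x
      cases b
      · have := step a (-1) (by decide) _ ih
        rwa [zpow_neg_one] at this
      · have := step a 1 (by decide) _ ih
        rwa [zpow_one] at this
  have := hlist w.toWord
  rwa [FreeGroup.mk_toWord] at this

theorem free_resid_s9 (p : ℕ) (hp : p.Prime) {E : Type} (w : FreeGroup E) (hw : w ≠ 1) :
    ∃ (H : Type) (_ : Group H) (f : FreeGroup E →* H), Finite H ∧ IsPGroup p H ∧ f w ≠ 1 := by
  classical
  obtain ⟨l, h0, hc, rfl⟩ := syllables w
  have hl : l ≠ [] := by rintro rfl; simp at hw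
  obtain ⟨m, hm⟩ : ∃ m : ℕ, (((l.map Prod.snd).prod : ℤ) : ZMod (p ^ m)) ≠ 0 := by
    have hne : (l.map Prod.snd).prod ≠ 0 := by
      rw [ne_eq, List.prod_eq_zero_iff]
      intro h
      obtain ⟨s, hs, hs0⟩ := List.mem_map.mp h
      exact h0 s hs hs0
    refine ⟨(l.map Prod.snd).prod.natAbs, ?_⟩
    rw [ne_eq, ZMod.intCast_zmod_eq_zero_iff_dvd]
    intro hd
    have := Nat.le_of_dvd (Int.natAbs_pos.mpr hne) (by simpa using Int.natAbs_dvd_natAbs.mpr hd)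
    exact absurd (Nat.lt_pow_self hp.one_lt (n := (l.map Prod.snd).prod.natAbs)) (by omega)
  have : NeZero (p ^ m) := ⟨pow_ne_zero _ hp.ne_zero⟩
  set R := ZMod (p ^ m)
  set k := l.length with hk
  let N : E → Matrix (Fin (k + 1)) (Fin (k + 1)) R := fun a =>
    Matrix.of fun i j => if (j : ℕ) = i + 1 ∧ (l[(i : ℕ)]?).map Prod.fst = some a then 1 else 0
  have hNdef : ∀ a i j, N a i j =
    if (j : ℕ) = i + 1 ∧ (l[(i : ℕ)]?).map Prod.fst = some a then 1 else 0 := fun _ _ _ => rfl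
  have hN2 : ∀ a, N a * N a = 0 := by
    intro a
    ext i j
    rw [Matrix.mul_apply, Matrix.zero_apply]
    apply Finset.sum_eq_zero
    intro c _
    rw [hNdef, hNdef]
    split_ifs with h1 h2 h2 <;> try simp
    exfalso
    obtain ⟨h1, h1'⟩ := h1
    obtain ⟨h2, h2'⟩ := h2
    rw [h1] at h2'
    simp only [Option.map_eq_some_iff, List.getElem?_eq_some_iff] at h1' h2'
    obtain ⟨s, ⟨hs, rfl⟩, hs'⟩ := h1'
    obtain ⟨t, ⟨ht, rfl⟩, ht'⟩ := h2'
    exact (List.isChain_iff_getElem.mp hc i ht) (hs'.trans ht'.symm)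
  let u : E → (Matrix (Fin (k + 1)) (Fin (k + 1)) R)ˣ := fun a =>
    ⟨1 + N a, 1 - N a, by simp [mul_sub, add_mul, hN2], by simp [mul_add, sub_mul, hN2]⟩
  have hu : ∀ a, u a ∈ utGroup R (k + 1) := by
    intro a
    rw [mem_utGroup]
    intro i j hij
    simp only [u, add_sub_cancel_left, hNdef]
    rw [if_neg]
    rw [Fin.le_def] at hij
    omega
  have hun : ∀ a (n : ℕ), ((u a) ^ n).val = 1 + ((n : ℤ) : R) • N a := by
    intro a n
    induction n with
    | zero => simp
    | succ n ih =>
      rw [pow_succ, Units.val_mul, ih]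
      simp only [u, mul_add, add_mul, mul_one, one_mul, smul_mul_assoc, hN2, smul_zero, add_zero]
      push_cast
      rw [add_smul, one_smul, add_assoc]
  have huz : ∀ a (n : ℤ), ((u a) ^ n).val = 1 + ((n : ℤ) : R) • N a := by
    intro a n
    obtain ⟨n, rfl | rfl⟩ := n.eq_nat_or_neg
    · rw [zpow_natCast, hun]
    · rw [zpow_neg, zpow_natCast]
      apply Units.inv_eq_of_mul_eq_one_right
      rw [hun]
      simp only [mul_add, add_mul, mul_one, one_mul, smul_mul_assoc, mul_smul_comm, hN2, smul_zero, add_zero]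
      push_cast
      rw [neg_smul]
      abel
  let f : FreeGroup E →* utGroup R (k + 1) := FreeGroup.lift fun a => ⟨u a, hu a⟩
  refine ⟨utGroup R (k + 1), inferInstance, f, inferInstance,
    utGroup_isPGroup p hp R m (by rw [← Nat.cast_pow]; exact ZMod.natCast_self (p ^ m)) _, ?_⟩
  let P : List (E × ℤ) → Matrix (Fin (k + 1)) (Fin (k + 1)) R := fun s =>
    (s.map fun s => 1 + ((s.2 : ℤ) : R) • N s.1).prod
  have hfP : ∀ s : List (E × ℤ),
      (f (s.map fun s => FreeGroup.of s.1 ^ s.2).prod).val.val = P s := by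
    intro s
    induction s with
    | nil => simp [P]
    | cons a s ih =>
      simp only [List.map_cons, List.prod_cons, map_mul, Subgroup.coe_mul, Units.val_mul, ih, P]
      congr 1
      rw [← huz]
      simp [f]
  have key : ∀ j, j ≤ k → (∀ i : Fin (k + 1), (i : ℕ) < k - j → P (l.drop (k - j)) i (Fin.last k) = 0) ∧
      (∀ i : Fin (k + 1), (i : ℕ) = k - j → P (l.drop (k - j)) i (Fin.last k) =
        (((l.drop (k - j)).map Prod.snd).prod : ℤ)) := by
    intro j
    induction j with
    | zero =>
      intro _
      simp only [Nat.sub_zero, hk, List.drop_length, P, List.map_nil, List.prod_nil]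
      refine ⟨fun i hi => ?_, fun i hi => ?_⟩
      · rw [Matrix.one_apply_ne]; rintro rfl; simp [hk] at hi
      · have : i = Fin.last k := Fin.ext hi
        subst this
        simp
    | succ j ih =>
      intro hj
      obtain ⟨ih1, ih2⟩ := ih (by omega)
      have hlt : k - (j + 1) < l.length := by omega
      have hd : l.drop (k - (j + 1)) = l[k - (j + 1)] :: l.drop (k - j) := by
        rw [List.drop_eq_getElem_cons hlt]
        congr 2
        omega
      have hP : ∀ i : Fin (k + 1), P (l.drop (k - (j + 1))) i (Fin.last k) =
          P (l.drop (k - j)) i (Fin.last k) + ((l[k - (j + 1)].2 : ℤ) : R) *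
            ∑ c, N l[k - (j + 1)].1 i c * P (l.drop (k - j)) c (Fin.last k) := by
        intro i
        rw [hd]
        simp only [P, List.map_cons, List.prod_cons]
        rw [add_mul, one_mul, Matrix.add_apply, smul_mul_assoc, Matrix.smul_apply,
          Matrix.mul_apply, smul_eq_mul]
      refine ⟨fun i hi => ?_, fun i hi => ?_⟩
      · rw [hP, ih1 i (by omega), Finset.sum_eq_zero, mul_zero, add_zero]
        intro c _
        rw [hNdef]
        split_ifs with h
        · rw [ih1 c (by omega), mul_zero]
        · rw [zero_mul]
      · rw [hP, ih1 i (by omega), hd, List.map_cons, List.prod_cons, zero_add, Int.cast_mul]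
        congr 1
        have hlt' : k - j < k + 1 := by omega
        rw [Finset.sum_eq_single (⟨k - j, hlt'⟩ : Fin (k + 1))]
        · rw [hNdef, if_pos, one_mul, ih2 _ rfl]
          · refine ⟨by simp only []; omega, ?_⟩
            rw [hi, List.getElem?_eq_getElem hlt]
            rfl
        · intro c _ hcne
          rw [hNdef, if_neg, zero_mul]
          rintro ⟨h, -⟩
          apply hcne
          ext
          simp only []
          omega
        · simp
  intro hcon
  have h1 := (key k le_rfl).2 0 (by simp)
  have h2 := hfP l
  rw [hcon] at h2
  simp only [Nat.sub_self, List.drop_zero] at h1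
  rw [← h2] at h1
  apply hm
  rw [← h1]
  simp only [OneMemClass.coe_one, Units.val_one]
  rw [Matrix.one_apply_ne]
  intro h
  have := congrArg Fin.val h
  simp at this
  have : 0 < l.length := List.length_pos_iff.mpr hl
  omega

inductive HNF {G K ι E : Type} [Group G] [Group K] (κ : K →* G) (T : ι × Bool → G)
    (ell : G → ι × Bool → E × Bool) : G → List (E × Bool) → Prop
  | base (k : K) : HNF κ T ell (κ k) []
  | step (g : G) (L : List (E × Bool)) (c : ι × Bool) (k : K) (h : HNF κ T ell g L)
      (hr : FreeGroup.IsReduced (L ++ [ell g c])) :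
      HNF κ T ell (g * T c * κ k) (L ++ [ell g c])

theorem HNF.mulK {G K ι E : Type} [Group G] [Group K] {κ : K →* G} {T : ι × Bool → G}
    {ell : G → ι × Bool → E × Bool} {g : G} {L : List (E × Bool)} (h : HNF κ T ell g L) (k : K) :
    HNF κ T ell (g * κ k) L := by
  cases h with
  | base k' => rw [← map_mul]; exact .base _
  | step g L c k' h hr => rw [mul_assoc, ← map_mul]; exact .step _ _ _ _ h hr

theorem HNF.reduced {G K ι E : Type} [Group G] [Group K] {κ : K →* G} {T : ι × Bool → G}
    {ell : G → ι × Bool → E × Bool} {g : G} {L : List (E × Bool)} (h : HNF κ T ell g L) :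
    FreeGroup.IsReduced L := by
  cases h with
  | base k' => exact .nil
  | step g L c k' h hr => exact hr

theorem HNF.mulT {G K ι E : Type} [Group G] [Group K] {κ : K →* G} {T : ι × Bool → G}
    {ell : G → ι × Bool → E × Bool} {g : G} {L : List (E × Bool)}
    (hpinch : ∀ g c k c', (ell g c).1 = (ell (g * T c * κ k) c').1 →
      (ell g c).2 ≠ (ell (g * T c * κ k) c').2 → ∃ k', T c * κ k * T c' = κ k')
    (h : HNF κ T ell g L) (c' : ι × Bool) :
    ∃ L', HNF κ T ell (g * T c') L' := by
  have h' := h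
  cases h with
  | base k' =>
    have := HNF.step _ _ c' 1 h' .singleton
    rw [map_one, mul_one] at this
    exact ⟨_, this⟩
  | step g L c k h hr =>
    by_cases hcan : (ell g c).1 = (ell (g * T c * κ k) c').1 →
      (ell g c).2 = (ell (g * T c * κ k) c').2
    · have := HNF.step _ _ c' 1 h' (by
        unfold FreeGroup.IsReduced at hr ⊢
        rw [List.isChain_append]
        refine ⟨hr, by simp, ?_⟩
        simpa using hcan)
      rw [map_one, mul_one] at this
      exact ⟨_, this⟩
    · push Not at hcan
      obtain ⟨k', hk'⟩ := hpinch _ _ _ _ hcan.1 hcan.2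
      refine ⟨L, ?_⟩
      have := h.mulK k'
      rwa [← hk', ← mul_assoc, ← mul_assoc] at this

def freeAct (X E : Type) [Group X] [MulAction X E] : X →* MulAut (FreeGroup E) where
  toFun x := FreeGroup.freeGroupCongr (MulAction.toPerm x)
  map_one' := by
    ext1 w
    change FreeGroup.map _ w = w
    have h : ((MulAction.toPerm (1 : X) : Equiv.Perm E) : E → E) = id := by
      ext e
      simp
    exact (congrArg (fun q => FreeGroup.map q w) h).trans (FreeGroup.map.id w)
  map_mul' x y := by
    ext1 w
    change FreeGroup.map _ w = FreeGroup.map _ (FreeGroup.map _ w)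
    rw [FreeGroup.map.comp]
    congr 2
    ext e
    simp [mul_smul]

theorem freeAct_of {X E : Type} [Group X] [MulAction X E] (x : X) (e : E) :
    freeAct X E x (FreeGroup.of e) = FreeGroup.of (x • e) := by
  change FreeGroup.map _ (FreeGroup.of e) = _
  simp

theorem sdp_isPGroup {p : ℕ} (hp : p.Prime) {N G : Type} [Group N] [Group G] [Finite N] [Finite G]
    (f : G →* MulAut N) (hN : IsPGroup p N) (hG : IsPGroup p G) :
    Finite (N ⋊[f] G) ∧ IsPGroup p (N ⋊[f] G) := by
  have := Fact.mk hp
  refine ⟨Finite.of_equiv _ SemidirectProduct.equivProd.symm, ?_⟩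
  obtain ⟨a, ha⟩ := IsPGroup.iff_card.mp hN
  obtain ⟨b, hb⟩ := IsPGroup.iff_card.mp hG
  apply IsPGroup.of_card (n := a + b)
  rw [SemidirectProduct.card, ha, hb, pow_add]

/-- a free group extended by a finite `p`-group (permuting the basis) is residually `p` -/
theorem free_sdp_resid {p : ℕ} (hp : p.Prime) {X E : Type} [Group X] [MulAction X E] [Finite X]
    (hX : IsPGroup p X) (z : FreeGroup E ⋊[freeAct X E] X) (hz : z ≠ 1) :
    ∃ (Q : Type) (_ : Group Q) (f : (FreeGroup E ⋊[freeAct X E] X) →* Q),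
      Finite Q ∧ IsPGroup p Q ∧ f z ≠ 1 := by
  by_cases hr : z.right = 1
  · have hl : z.left ≠ 1 := fun h => hz (SemidirectProduct.ext h hr)
    obtain ⟨H, _, ψ, hfin, hH, hψ⟩ := free_resid_s9 p hp z.left hl
    let ψ' : FreeGroup E →* (X → H) :=
      MonoidHom.pi fun x => ψ.comp (freeAct X E x⁻¹).toMonoidHom
    have hpow : IsPGroup p (X → H) := by
      have := Fact.mk hp
      obtain ⟨a, ha⟩ := IsPGroup.iff_card.mp hH
      apply IsPGroup.of_card (n := a * Nat.card X)
      rw [Nat.card_fun, ha, pow_mul]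
    obtain ⟨h1, h2⟩ := sdp_isPGroup hp (mulAutArrow (G := X) (A := X) (M := H)) hpow hX
    refine ⟨(X → H) ⋊[mulAutArrow (G := X) (A := X) (M := H)] X, inferInstance,
      SemidirectProduct.map ψ' (MonoidHom.id X) ?_, h1, h2, ?_⟩
    · intro x
      ext w y
      change ψ (freeAct X E y⁻¹ (freeAct X E x (FreeGroup.of w)))
        = ψ (freeAct X E (x⁻¹ * y)⁻¹ (FreeGroup.of w))
      simp only [freeAct_of, smul_smul, mul_inv_rev, inv_inv]
    · intro h
      have h3 := congrArg (fun q => q.left 1) h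
      change ψ (freeAct X E 1⁻¹ z.left) = 1 at h3
      rw [inv_one, map_one] at h3
      exact hψ h3
  · exact ⟨X, inferInstance, SemidirectProduct.rightHom, inferInstance, hX, hr⟩

theorem hnn_inj {G K X ι : Type} [Group G] [Group K] [Group X] (κ : K →* G) (τ : ι → G)
    (hgen : Subgroup.closure (Set.range κ ∪ Set.range τ) = ⊤)
    (j : K →* X) (hj : Function.Injective j) (s : ι → X) (A B : ι → Subgroup K) (θ : ι → MulAut K)
    (hAB : ∀ i k, θ i k ∈ B i ↔ k ∈ A i)
    (hconj : ∀ i, ∀ k ∈ A i, τ i * κ k * (τ i)⁻¹ = κ (θ i k))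
    (hs : ∀ i k, s i * j k * (s i)⁻¹ = j (θ i k))
    (F : G →* FreeGroup (Σ i, X ⧸ (B i).map j) ⋊[freeAct X (Σ i, X ⧸ (B i).map j)] X)
    (hκ : ∀ k, F (κ k) = ⟨1, j k⟩)
    (hτ : ∀ i, F (τ i) = ⟨FreeGroup.of ⟨i, ((1 : X) : X ⧸ (B i).map j)⟩, s i⟩)
    (g : G) (hg : F g = 1) : g = 1 := by
  let T : ι × Bool → G := fun c => if c.2 then τ c.1 else (τ c.1)⁻¹
  let ell : G → ι × Bool → (Σ i, X ⧸ (B i).map j) × Bool := fun g c =>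
    if c.2 then (⟨c.1, ((F g).right : X ⧸ (B c.1).map j)⟩, true)
    else (⟨c.1, ((F g).right * (s c.1)⁻¹ : X)⟩, false)
  have hsm : ∀ (x y : X) (i : ι), x • (⟨i, (y : X ⧸ (B i).map j)⟩ : Σ i, X ⧸ (B i).map j)
    = ⟨i, ((x * y : X) : X ⧸ (B i).map j)⟩ := fun _ _ _ => rfl
  have hpinch : ∀ g c k c', (ell g c).1 = (ell (g * T c * κ k) c').1 →
      (ell g c).2 ≠ (ell (g * T c * κ k) c').2 → ∃ k', T c * κ k * T c' = κ k' := by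
    rintro g ⟨i, b⟩ k ⟨i', b'⟩ h1 h2
    cases b <;> cases b'
    · simp [ell] at h2
    · simp only [ell, T, map_mul, map_inv, hτ, hκ, SemidirectProduct.mul_right,
        SemidirectProduct.inv_right, Bool.false_eq_true, if_false, if_true, Sigma.mk.injEq] at h1
      obtain ⟨rfl, h1⟩ := h1
      rw [heq_eq_eq, QuotientGroup.eq, inv_mul_cancel_left, Subgroup.mem_map_iff_mem hj] at h1
      refine ⟨(θ i).symm k, ?_⟩
      have := hconj i ((θ i).symm k) ((hAB _ _).mp (by simpa using h1))
      rw [MulEquiv.apply_symm_apply] at this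
      simp only [T, Bool.false_eq_true, if_false, if_true]
      rw [← this]
      group
    · simp only [ell, T, map_mul, map_inv, hτ, hκ, SemidirectProduct.mul_right,
        SemidirectProduct.inv_right, Bool.false_eq_true, if_false, if_true, Sigma.mk.injEq] at h1
      obtain ⟨rfl, h1⟩ := h1
      rw [heq_eq_eq, mul_assoc, mul_assoc, ← mul_assoc (s i), hs, QuotientGroup.eq,
        inv_mul_cancel_left, Subgroup.mem_map_iff_mem hj, hAB] at h1
      exact ⟨_, hconj i k h1⟩
    · simp [ell] at h2
  have hex : ∀ g : G, ∃ L, HNF κ T ell g L := by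
    intro g
    have hgm : g ∈ Subgroup.closure (Set.range κ ∪ Set.range τ) := by rw [hgen]; trivial
    induction hgm using Subgroup.closure_induction_right with
    | one => exact ⟨[], by simpa using HNF.base (κ := κ) (T := T) (ell := ell) 1⟩
    | mul_right x hx y hy ih =>
      obtain ⟨L, hL⟩ := ih
      rcases hy with ⟨k, rfl⟩ | ⟨i, rfl⟩
      · exact ⟨L, hL.mulK k⟩
      · exact hL.mulT hpinch (i, true)
    | mul_inv_cancel x hx y hy ih =>
      obtain ⟨L, hL⟩ := ih
      rcases hy with ⟨k, rfl⟩ | ⟨i, rfl⟩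
      · exact ⟨L, by simpa using hL.mulK k⁻¹⟩
      · exact hL.mulT hpinch (i, false)
  have hF : ∀ g L, HNF κ T ell g L → (F g).left = FreeGroup.mk L := by
    intro g L h
    induction h with
    | base k => rw [hκ]; rfl
    | step g L c k h hr ih =>
      rw [← FreeGroup.mul_mk, ← ih]
      obtain ⟨i, b⟩ := c
      cases b
      · simp only [ell, T, map_mul, map_inv F, hτ, hκ, SemidirectProduct.mul_right,
          SemidirectProduct.mul_left, SemidirectProduct.inv_left,
          SemidirectProduct.inv_right, Bool.false_eq_true, if_false, map_one, mul_one]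
        rw [map_inv (freeAct X _ (s i)⁻¹), map_inv (freeAct X _ (F g).right), freeAct_of,
          freeAct_of, hsm, hsm, mul_one]
        rfl
      · simp only [ell, T, map_mul, hτ, hκ, SemidirectProduct.mul_right,
          SemidirectProduct.mul_left, if_true, map_one, mul_one, freeAct_of, hsm]
        rfl
  obtain ⟨L, hL⟩ := hex g
  have h1 := hF g L hL
  rw [hg, SemidirectProduct.one_left] at h1
  have h2 : L = [] := by
    classical
    have h3 := congrArg FreeGroup.toWord h1
    rw [FreeGroup.toWord_one, FreeGroup.toWord_mk, hL.reduced.reduce_eq] at h3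
    exact h3.symm
  cases hL with
  | step g L c k h hr => simp at h2
  | base k =>
    rw [hκ] at hg
    have h4 : j k = 1 := congrArg SemidirectProduct.right hg
    rw [hj (h4.trans (map_one j).symm), map_one]

theorem stmt_9 (p : ℕ) (hp : p.Prime) (K : Type) [Group K] [Finite K]
    (hK : IsPGroup p K) (n : ℕ) (A B : Fin n → Subgroup K)
    (φ : ∀ i, (A i) ≃* (B i)) (θ : Fin n → MulAut K)
    (hext : ∀ i (a : A i), θ i (a : K) = ((φ i a : B i) : K))
    (hθ : IsPGroup p (Subgroup.closure (Set.range θ) : Subgroup (MulAut K)))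
    (g : PresentedGroup
      ({w : FreeGroup (K ⊕ Fin n) |
          (∃ k k' : K, w = FreeGroup.of (Sum.inl k) * FreeGroup.of (Sum.inl k') *
            (FreeGroup.of (Sum.inl (k * k')))⁻¹) ∨
          (∃ (i : Fin n) (a : K) (ha : a ∈ A i),
            w = FreeGroup.of (Sum.inr i) * FreeGroup.of (Sum.inl a) *
              (FreeGroup.of (Sum.inr i))⁻¹ *
              (FreeGroup.of (Sum.inl ((φ i ⟨a, ha⟩ : B i) : K)))⁻¹)}))
    (hg : g ≠ 1) :
    ∃ (Q : Type) (_ : Group Q) (f : _ →* Q), Finite Q ∧ IsPGroup p Q ∧ f g ≠ 1 := by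
  classical
  let P := Subgroup.closure (Set.range θ)
  let X := K ⋊[P.subtype] P
  obtain ⟨hXf, hX⟩ := sdp_isPGroup hp P.subtype hK hθ
  let j : K →* X := SemidirectProduct.inl
  have hj : Function.Injective j := SemidirectProduct.inl_injective
  let s : Fin n → X := fun i => SemidirectProduct.inr ⟨θ i, Subgroup.subset_closure ⟨i, rfl⟩⟩
  have hs : ∀ i k, s i * j k * (s i)⁻¹ = j (θ i k) := by
    intro i k
    simp only [s, j]
    rw [← map_inv, ← SemidirectProduct.inl_aut]
    rfl
  have hAB : ∀ i k, θ i k ∈ B i ↔ k ∈ A i := by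
    intro i k
    constructor
    · intro h
      obtain ⟨a, ha⟩ := (φ i).surjective ⟨_, h⟩
      have h1 := hext i a
      rw [ha] at h1
      rw [← (θ i).injective h1]
      exact a.2
    · intro h
      rw [hext i ⟨k, h⟩]
      exact (φ i ⟨k, h⟩).2
  let E := Σ i, X ⧸ (B i).map j
  generalize hrels : {w : FreeGroup (K ⊕ Fin n) |
          (∃ k k' : K, w = FreeGroup.of (Sum.inl k) * FreeGroup.of (Sum.inl k') *
            (FreeGroup.of (Sum.inl (k * k')))⁻¹) ∨
          (∃ (i : Fin n) (a : K) (ha : a ∈ A i),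
            w = FreeGroup.of (Sum.inr i) * FreeGroup.of (Sum.inl a) *
              (FreeGroup.of (Sum.inr i))⁻¹ *
              (FreeGroup.of (Sum.inl ((φ i ⟨a, ha⟩ : B i) : K)))⁻¹)} = rels at g hg ⊢
  have hrel : ∀ w ∈ rels, PresentedGroup.mk rels w = 1 := fun w hw =>
    (QuotientGroup.eq_one_iff w).mpr (Subgroup.subset_normalClosure hw)
  let κ : K →* PresentedGroup rels := MonoidHom.mk'
    (fun k => PresentedGroup.of (Sum.inl k)) (by
      intro k k'
      have := hrel _ (by rw [← hrels]; exact Or.inl ⟨k, k', rfl⟩)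
      simp only [map_mul, map_inv] at this
      exact (mul_inv_eq_one.mp this).symm)
  let τ : Fin n → PresentedGroup rels := fun i => PresentedGroup.of (Sum.inr i)
  have hconj : ∀ i, ∀ k ∈ A i, τ i * κ k * (τ i)⁻¹ = κ (θ i k) := by
    intro i k hk
    have := hrel _ (by rw [← hrels]; exact Or.inr ⟨i, k, hk, rfl⟩)
    simp only [map_mul, map_inv] at this
    rw [hext i ⟨k, hk⟩]
    exact mul_inv_eq_one.mp this
  have hgen : Subgroup.closure (Set.range κ ∪ Set.range τ) = ⊤ := by
    rw [eq_top_iff, ← PresentedGroup.closure_range_of rels, Subgroup.closure_le]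
    rintro _ ⟨k | i, rfl⟩
    · exact Subgroup.subset_closure (Or.inl ⟨k, rfl⟩)
    · exact Subgroup.subset_closure (Or.inr ⟨i, rfl⟩)
  let f0 : K ⊕ Fin n → FreeGroup E ⋊[freeAct X E] X :=
    Sum.elim (fun k => ⟨1, j k⟩) (fun i => ⟨FreeGroup.of ⟨i, ((1 : X) : X ⧸ (B i).map j)⟩, s i⟩)
  have hf0 : ∀ r ∈ rels, FreeGroup.lift f0 r = 1 := by
    intro r hr
    rw [← hrels] at hr
    rcases hr with ⟨k, k', rfl⟩ | ⟨i, a, ha, rfl⟩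
    · simp only [map_mul, map_inv, FreeGroup.lift_apply_of, f0, Sum.elim_inl]
      rw [mul_inv_eq_one]
      apply SemidirectProduct.ext
      · simp only [SemidirectProduct.mul_left, map_one, mul_one]
      · simp only [SemidirectProduct.mul_right, map_mul]
    · simp only [map_mul, map_inv, FreeGroup.lift_apply_of, f0, Sum.elim_inl, Sum.elim_inr]
      rw [mul_inv_eq_one, mul_inv_eq_iff_eq_mul, ← hext i ⟨a, ha⟩]
      apply SemidirectProduct.ext
      · simp only [SemidirectProduct.mul_left, map_one, mul_one, one_mul, freeAct_of]
        congr 1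
        change _ = (⟨i, ((j (θ i a) * 1 : X) : X ⧸ (B i).map j)⟩ : E)
        congr 1
        rw [QuotientGroup.eq, inv_one, one_mul, mul_one, Subgroup.mem_map_iff_mem hj, hAB]
        exact ha
      · simp only [SemidirectProduct.mul_right]
        rw [← hs, inv_mul_cancel_right]
  let F : PresentedGroup rels →* FreeGroup E ⋊[freeAct X E] X := PresentedGroup.toGroup hf0
  have hFg : F g ≠ 1 := fun h => hg (hnn_inj κ τ hgen j hj s A B θ hAB hconj hs F
    (fun k => PresentedGroup.toGroup.of hf0) (fun i => PresentedGroup.toGroup.of hf0) g h)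
  obtain ⟨Q, _, q, h1, h2, h3⟩ := free_sdp_resid hp hX (F g) hFg
  exact ⟨Q, inferInstance, q.comp F, h1, h2, h3⟩
end

section
/- Let p be a prime and let H_s = ⟨a, t₁,…,t_r | a^(p^s) = 1, tᵢ a^(nᵢ) tᵢ⁻¹ = a^(mᵢ)⟩ where nᵢ = p^(σᵢ) n̂ᵢ, mᵢ = p^(σᵢ) m̂ᵢ with p ∤ n̂ᵢ m̂ᵢ and p | (m̂ᵢ − n̂ᵢ) for all i. Then H_s is residually a finite p-group. -/
/-- `HW A t k g`: the element `g` can be written with at most `k` letters `t i ^ ±1`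
and elements of the subgroup `A`. -/
inductive HW {H : Type} [Group H] {r : ℕ} (A : Subgroup H) (t : Fin r → H) : ℕ → H → Prop
  | base (k : ℕ) (c : H) (hc : c ∈ A) : HW A t k c
  | pos (k : ℕ) (c : H) (hc : c ∈ A) (i : Fin r) (g : H) (hg : HW A t k g) :
      HW A t (k + 1) (c * t i * g)
  | neg (k : ℕ) (c : H) (hc : c ∈ A) (i : Fin r) (g : H) (hg : HW A t k g) :
      HW A t (k + 1) (c * (t i)⁻¹ * g)

namespace HW

variable {H : Type} [Group H] {r : ℕ} {A : Subgroup H} {t : Fin r → H}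

theorem mono {k : ℕ} {g : H} (h : HW A t k g) : ∀ {l : ℕ}, k ≤ l → HW A t l g := by
  induction h with
  | base k c hc => intro l _; exact HW.base l c hc
  | pos k c hc i g hg ih =>
    intro l hl
    obtain ⟨l, rfl⟩ : ∃ l', l = l' + 1 := ⟨l - 1, by omega⟩
    exact HW.pos l c hc i g (ih (by omega))
  | neg k c hc i g hg ih =>
    intro l hl
    obtain ⟨l, rfl⟩ : ∃ l', l = l' + 1 := ⟨l - 1, by omega⟩
    exact HW.neg l c hc i g (ih (by omega))

theorem smul {k : ℕ} {g : H} (h : HW A t k g) {c : H} (hc : c ∈ A) : HW A t k (c * g) := by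
  cases h with
  | base _ d hd => exact HW.base k _ (A.mul_mem hc hd)
  | pos k d hd i g hg =>
    have := HW.pos k (c * d) (A.mul_mem hc hd) i g hg
    simpa only [mul_assoc] using this
  | neg k d hd i g hg =>
    have := HW.neg k (c * d) (A.mul_mem hc hd) i g hg
    simpa only [mul_assoc] using this

theorem mul {k l : ℕ} {g h : H} (hg : HW A t k g) (hh : HW A t l h) :
    HW A t (k + l) (g * h) := by
  induction hg with
  | base k c hc => exact (hh.smul hc).mono (by omega)
  | pos k c hc i g hg ih =>
    have := HW.pos (k + l) c hc i _ ih
    rw [show k + 1 + l = k + l + 1 by omega]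
    simpa only [mul_assoc] using this
  | neg k c hc i g hg ih =>
    have := HW.neg (k + l) c hc i _ ih
    rw [show k + 1 + l = k + l + 1 by omega]
    simpa only [mul_assoc] using this

theorem tpos (i : Fin r) : HW A t 1 (t i) := by
  have := HW.pos (A := A) (t := t) 0 1 A.one_mem i 1 (HW.base 0 1 A.one_mem)
  simpa using this

theorem tneg (i : Fin r) : HW A t 1 (t i)⁻¹ := by
  have := HW.neg (A := A) (t := t) 0 1 A.one_mem i 1 (HW.base 0 1 A.one_mem)
  simpa using this

theorem inv {k : ℕ} {g : H} (hg : HW A t k g) : HW A t k g⁻¹ := by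
  induction hg with
  | base k c hc => exact HW.base k _ (A.inv_mem hc)
  | pos k c hc i g hg ih =>
    have := ih.mul ((tneg (A := A) (t := t) i).mul (HW.base 0 _ (A.inv_mem hc)))
    simpa only [mul_inv_rev, mul_assoc] using this
  | neg k c hc i g hg ih =>
    have := ih.mul ((tpos (A := A) (t := t) i).mul (HW.base 0 _ (A.inv_mem hc)))
    simpa only [mul_inv_rev, mul_assoc, inv_inv] using this

theorem zero {g : H} (h : HW A t 0 g) : g ∈ A := by
  cases h with
  | base _ _ hc => exact hc

end HW

open Classical in
/-- Support of the Fox-type cocycle. -/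
theorem hw_support {H : Type} [Group H] {r : ℕ} {A : Subgroup H} {t : Fin r → H}
    {Q D : Type} [Group Q] [Group D] (B : Fin r → Subgroup Q)
    (f' : H →* RegularWreathProduct (Fin r → D) Q) (d : D)
    (hA : ∀ c ∈ A, (f' c).left = 1)
    (ht : ∀ i, (f' (t i)).left = fun x j => if j = i ∧ x ∈ B i then d else 1)
    {k : ℕ} {g : H} (hg : HW A t k g) :
    ∀ (q : Q) (i : Fin r), (f' g).left q i ≠ 1 →
      ∃ (l l' : ℕ) (x y : H), l + l' + 1 ≤ k ∧ HW A t l x ∧ HW A t l' y ∧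
        ((g = x * t i * y ∧ (f' x).right⁻¹ * q ∈ B i) ∨
         (g = x * (t i)⁻¹ * y ∧ (f' (x * (t i)⁻¹)).right⁻¹ * q ∈ B i)) := by
  induction hg with
  | base k c hc => intro q i h; rw [hA c hc] at h; exact absurd rfl h
  | pos k c hc j g hg ih =>
    intro q i h
    by_cases h1 : i = j ∧ (f' c).right⁻¹ * q ∈ B j
    · obtain ⟨rfl, h1⟩ := h1
      exact ⟨0, k, c, g, by omega, HW.base _ _ hc, hg, Or.inl ⟨rfl, h1⟩⟩
    · have h2 : (f' g).left ((f' (c * t j)).right⁻¹ * q) i ≠ 1 := by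
        intro h3
        apply h
        rw [map_mul, RegularWreathProduct.mul_left, Pi.mul_apply, Pi.mul_apply, h3, mul_one,
          map_mul, RegularWreathProduct.mul_left, hA c hc, one_mul, ht]
        exact if_neg h1
      obtain ⟨l, l', x, y, hl, hx, hy, hor⟩ := ih _ _ h2
      refine ⟨l + 1, l', c * t j * x, y, by omega, HW.pos l c hc j x hx, hy, ?_⟩
      rcases hor with ⟨rfl, h4⟩ | ⟨rfl, h4⟩
      · refine Or.inl ⟨by simp only [mul_assoc], ?_⟩
        rw [map_mul f' (c * t j), RegularWreathProduct.mul_right, mul_inv_rev, mul_assoc]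
        exact h4
      · refine Or.inr ⟨by simp only [mul_assoc], ?_⟩
        rw [mul_assoc (c * t j), map_mul f' (c * t j), RegularWreathProduct.mul_right, mul_inv_rev,
          mul_assoc]
        exact h4
  | neg k c hc j g hg ih =>
    intro q i h
    by_cases h1 : i = j ∧ (f' (c * (t j)⁻¹)).right⁻¹ * q ∈ B j
    · obtain ⟨rfl, h1⟩ := h1
      exact ⟨0, k, c, g, by omega, HW.base _ _ hc, hg, Or.inr ⟨rfl, h1⟩⟩
    · have h2 : (f' g).left ((f' (c * (t j)⁻¹)).right⁻¹ * q) i ≠ 1 := by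
        intro h3
        apply h
        rw [map_mul, RegularWreathProduct.mul_left, Pi.mul_apply, Pi.mul_apply, h3, mul_one,
          map_mul, RegularWreathProduct.mul_left, hA c hc, one_mul, map_inv,
          RegularWreathProduct.inv_left, Pi.inv_def, ht]
        simp only [Pi.inv_apply, inv_eq_one]
        refine if_neg ?_
        simpa [mul_assoc] using h1
      obtain ⟨l, l', x, y, hl, hx, hy, hor⟩ := ih _ _ h2
      refine ⟨l + 1, l', c * (t j)⁻¹ * x, y, by omega, HW.neg l c hc j x hx, hy, ?_⟩
      rcases hor with ⟨rfl, h4⟩ | ⟨rfl, h4⟩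
      · refine Or.inl ⟨by simp only [mul_assoc], ?_⟩
        rw [map_mul f' (c * (t j)⁻¹), RegularWreathProduct.mul_right, mul_inv_rev, mul_assoc]
        exact h4
      · refine Or.inr ⟨by simp only [mul_assoc], ?_⟩
        rw [mul_assoc (c * (t j)⁻¹), map_mul f' (c * (t j)⁻¹), RegularWreathProduct.mul_right,
          mul_inv_rev, mul_assoc]
        exact h4

open Classical in
/-- The key inductive step: one more wreath product separates longer words. -/
theorem hw_key {H : Type} [Group H] {r : ℕ} {A : Subgroup H} {t : Fin r → H}
    {Q D : Type} [Group Q] [Group D] (B : Fin r → Subgroup H)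
    (hBA : ∀ i, B i ≤ A)
    (hB1 : ∀ i, ∀ x ∈ B i, t i * x * (t i)⁻¹ ∈ B i)
    (hB2 : ∀ i, ∀ x ∈ B i, (t i)⁻¹ * x * t i ∈ B i)
    (f : H →* Q) (f' : H →* RegularWreathProduct (Fin r → D) Q) (d : D) (hd : d ≠ 1)
    (hff : ∀ x, (f' x).right = f x)
    (hA : ∀ c ∈ A, (f' c).left = 1)
    (ht : ∀ i, (f' (t i)).left = fun x j => if j = i ∧ x ∈ (B i).map f then d else 1)
    (hinj : ∀ x ∈ A, f x = 1 → x = 1)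
    {k : ℕ} (ih : ∀ g, HW A t k g → f g ∈ A.map f → g ∈ A)
    {g : H} (hg : HW A t (k + 1) g) (hgA : f' g ∈ A.map f') : g ∈ A := by
  have hinB : ∀ i x, x ∈ A → f x ∈ (B i).map f → x ∈ B i := by
    rintro i x hx ⟨b, hb, hbx⟩
    have : b⁻¹ * x = 1 := hinj _ (A.mul_mem (A.inv_mem (hBA i hb)) hx) (by simp [hbx])
    rw [← inv_mul_eq_one.mp this]; exact hb
  have hBA' : ∀ i, (B i).map f ≤ A.map f := fun i => Subgroup.map_mono (hBA i)
  have hmapA : f g ∈ A.map f := by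
    obtain ⟨c, hc, hcg⟩ := hgA
    exact ⟨c, hc, by rw [← hff, ← hff, hcg]⟩
  have hleft : (f' g).left = 1 := by
    obtain ⟨c, hc, hcg⟩ := hgA
    rw [← hcg]; exact hA c hc
  have short : ∀ {l : ℕ}, HW A t l g → l ≤ k → g ∈ A := fun h hl => ih g (h.mono hl) hmapA
  cases hg with
  | base _ _ hc => exact hc
  | pos _ c hc i g hg =>
    have h0 : (f' g).left ((f' (c * t i)).right⁻¹ * f c) i ≠ 1 := by
      intro h0
      have := congrFun (congrFun hleft (f c)) i
      rw [map_mul, RegularWreathProduct.mul_left, Pi.mul_apply, Pi.mul_apply, h0, mul_one,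
          map_mul, RegularWreathProduct.mul_left, hA c hc, one_mul, ht, hff] at this
      simp only [inv_mul_cancel, one_mem, and_self, if_true, Pi.one_apply] at this
      exact hd this
    obtain ⟨l, l', x, y, hl, hx, hy, ⟨rfl, h4⟩ | ⟨rfl, h4⟩⟩ :=
      hw_support (fun i => (B i).map f) f' d hA ht hg _ _ h0
    · skip
      have h5 : f (t i * x) ∈ A.map f := by
        have := inv_mem (hBA' i h4)
        simpa [hff, mul_assoc] using this
      have h6 : t i * x ∈ A := ih _ (((HW.tpos i).mul hx).mono (by omega)) h5
      refine short (l := l' + 1) ?_ (by omega)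
      have := HW.pos l' _ (A.mul_mem hc h6) i y hy
      simpa only [mul_assoc] using this
    · have h5 : f x ∈ (B i).map f := by
        have h6 := inv_mem h4
        rw [hff, hff] at h6
        simp only [map_mul, map_inv, mul_inv_rev, inv_inv, mul_assoc,
          inv_mul_cancel_left] at h6
        obtain ⟨b, hb, hbx⟩ := h6
        refine ⟨_, hB2 i b hb, ?_⟩
        simp [hbx, mul_assoc]
      have h6 : x ∈ A := ih _ (hx.mono (by omega)) (hBA' i h5)
      have h7 := hB1 i x (hinB i x h6 h5)
      refine short (l := l') ?_ (by omega)
      have := hy.smul (A.mul_mem hc (hBA i h7))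
      simpa only [mul_assoc] using this
  | neg _ c hc i g hg =>
    have h0 : (f' g).left ((f' (c * (t i)⁻¹)).right⁻¹ * f (c * (t i)⁻¹)) i ≠ 1 := by
      intro h0
      have := congrFun (congrFun hleft (f (c * (t i)⁻¹))) i
      rw [map_mul, RegularWreathProduct.mul_left, Pi.mul_apply, Pi.mul_apply, h0, mul_one,
          map_mul, RegularWreathProduct.mul_left, hA c hc, one_mul, map_inv,
          RegularWreathProduct.inv_left, Pi.inv_def, ht, hff, hff] at this
      simp [one_mem] at this
      exact hd this
    rw [hff, inv_mul_cancel] at h0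
    obtain ⟨l, l', x, y, hl, hx, hy, ⟨rfl, h4⟩ | ⟨rfl, h4⟩⟩ :=
      hw_support (fun i => (B i).map f) f' d hA ht hg _ _ h0
    · have h5 : f x ∈ (B i).map f := by
        have := inv_mem h4
        simpa [hff] using this
      have h6 : x ∈ A := ih _ (hx.mono (by omega)) (hBA' i h5)
      have h7 := hB2 i x (hinB i x h6 h5)
      refine short (l := l') ?_ (by omega)
      have := hy.smul (A.mul_mem hc (hBA i h7))
      simpa only [mul_assoc] using this
    · have h5 : f ((t i)⁻¹ * x) ∈ A.map f := by
        have h6 := inv_mem h4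
        rw [mul_one, inv_inv, hff] at h6
        obtain ⟨b, hb, hbx⟩ := h6
        refine ⟨_, hBA i (hB2 i b hb), ?_⟩
        simp [hbx, mul_assoc]
      have h6 : (t i)⁻¹ * x ∈ A := ih _ (((HW.tneg i).mul hx).mono (by omega)) h5
      refine short (l := l' + 1) ?_ (by omega)
      have := HW.neg l' _ (A.mul_mem hc h6) i y hy
      simpa only [mul_assoc] using this

/-- Powers of an element of `p`-power order: a prime-to-`p` factor does not change the subgroup. -/
theorem zpowers_factor {G : Type} [Group G] {p : ℕ} (hp : p.Prime) {s : ℕ} (a : G)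
    (ha : a ^ (p ^ s) = 1) (e : ℤ) (u : ℤ) (hu : ¬ (p : ℤ) ∣ u) :
    Subgroup.zpowers (a ^ (e * u)) = Subgroup.zpowers (a ^ e) := by
  apply le_antisymm
  · rw [Subgroup.zpowers_le, zpow_mul]
    exact Subgroup.zpow_mem_zpowers _ _
  · have hc : IsCoprime ((p : ℤ) ^ s) u :=
      IsCoprime.pow_left ((Nat.prime_iff_prime_int.mp hp).coprime_iff_not_dvd.mpr hu)
    obtain ⟨x, y, hxy⟩ := hc
    rw [Subgroup.zpowers_le]
    refine ⟨y, ?_⟩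
    have ha' : a ^ ((p : ℤ) ^ s) = 1 := by exact_mod_cast ha
    show (a ^ (e * u)) ^ y = a ^ e
    rw [← zpow_mul]
    have : e = e * u * y + (p : ℤ) ^ s * (e * x) := by linear_combination (-e) * hxy
    conv_rhs => rw [this, zpow_add, zpow_mul _ ((p : ℤ) ^ s), ha', one_zpow, mul_one]

/-- The action of a subgroup of units of `ZMod N` on the additive group. -/
def unitsAct (N : ℕ) (U : Subgroup (ZMod N)ˣ) : U →* MulAut (Multiplicative (ZMod N)) where
  toFun u :=
    { toFun := fun x => Multiplicative.ofAdd ((u.1 : ZMod N) * x.toAdd)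
      invFun := fun x => Multiplicative.ofAdd ((↑(u.1⁻¹) : ZMod N) * x.toAdd)
      left_inv := fun x => by simp
      right_inv := fun x => by simp
      map_mul' := fun x y => by simp [mul_add] }
  map_one' := by ext x; simp
  map_mul' u v := by ext x; simp [mul_assoc]

/-- A finite `p`-group quotient faithful on the base group. -/
theorem base_quotient {p : ℕ} (hp : p.Prime) (s r : ℕ)
    (n m : Fin r → ℤ) (σ : Fin r → ℕ) (nh mh : Fin r → ℤ)
    (hn : ∀ i, n i = (p : ℤ) ^ (σ i) * nh i)
    (hm : ∀ i, m i = (p : ℤ) ^ (σ i) * mh i)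
    (hcop : ∀ i, ¬ (p : ℤ) ∣ (nh i * mh i))
    (hdvd : ∀ i, (p : ℤ) ∣ (mh i - nh i)) :
    ∃ (Q : Type) (_ : Group Q) (α : Q) (τ : Fin r → Q), Finite Q ∧ IsPGroup p Q ∧
      α ^ (p ^ s) = 1 ∧ (∀ i, τ i * α ^ n i * (τ i)⁻¹ = α ^ m i) ∧
      ∀ k : ℤ, α ^ k = 1 → ((p ^ s : ℕ) : ℤ) ∣ k := by
  have : Fact p.Prime := ⟨hp⟩
  have : NeZero (p ^ s) := ⟨pow_ne_zero _ hp.ne_zero⟩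
  let U : Subgroup (ZMod (p ^ s))ˣ := (powMonoidHom (p ^ s)).ker
  have hunit : ∀ z : ℤ, ¬ (p : ℤ) ∣ z → IsUnit (z : ZMod (p ^ s)) := by
    intro z hz
    have hc : IsCoprime ((p : ℤ) ^ s) z :=
      IsCoprime.pow_left ((Nat.prime_iff_prime_int.mp hp).coprime_iff_not_dvd.mpr hz)
    obtain ⟨x, y, hxy⟩ := hc
    have := congrArg (Int.cast : ℤ → ZMod (p ^ s)) hxy
    push_cast at this
    have h0 : (p : ZMod (p ^ s)) ^ s = 0 := by exact_mod_cast ZMod.natCast_self (p ^ s)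
    rw [h0, mul_zero, zero_add] at this
    exact IsUnit.of_mul_eq_one_right _ this
  have hnu : ∀ i, IsUnit (nh i : ZMod (p ^ s)) := fun i =>
    hunit _ fun h => hcop i (h.mul_right _)
  have hmu : ∀ i, IsUnit (mh i : ZMod (p ^ s)) := fun i =>
    hunit _ fun h => hcop i (h.mul_left _)
  let u : Fin r → (ZMod (p ^ s))ˣ := fun i => (hmu i).unit * (hnu i).unit⁻¹
  have hu : ∀ i, u i ∈ U := by
    intro i
    show (u i) ^ (p ^ s) = 1
    rw [mul_pow, inv_pow, mul_inv_eq_one]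
    ext
    push_cast
    simp only [IsUnit.unit_spec]
    have h1 := dvd_sub_pow_of_dvd_sub (hdvd i) s
    have h2 : ((p ^ s : ℕ) : ℤ) ∣ mh i ^ p ^ s - nh i ^ p ^ s := by
      push_cast
      exact (pow_dvd_pow _ (Nat.le_succ s)).trans h1
    have h3 := (ZMod.intCast_zmod_eq_zero_iff_dvd _ _).mpr h2
    push_cast at h3
    exact sub_eq_zero.mp h3
  have hUp : IsPGroup p U := by
    rintro ⟨x, hx⟩
    exact ⟨s, Subtype.ext hx⟩
  have hαz : ∀ k : ℤ, (SemidirectProduct.inl (Multiplicative.ofAdd 1) :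
      Multiplicative (ZMod (p ^ s)) ⋊[unitsAct (p ^ s) U] U) ^ k =
      SemidirectProduct.inl (Multiplicative.ofAdd (k : ZMod (p ^ s))) := by
    intro k
    rw [← map_zpow, ← ofAdd_zsmul]
    simp
  refine ⟨Multiplicative (ZMod (p ^ s)) ⋊[unitsAct (p ^ s) U] U, inferInstance,
    SemidirectProduct.inl (Multiplicative.ofAdd 1),
    fun i => SemidirectProduct.inr ⟨u i, hu i⟩, ?_, ?_, ?_, ?_, ?_⟩
  · exact Finite.of_equiv _ SemidirectProduct.equivProd.symm
  · obtain ⟨e, he⟩ := (IsPGroup.iff_card (p := p)).mp hUp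
    refine IsPGroup.of_card (n := s + e) ?_
    rw [SemidirectProduct.card, he, Nat.card_congr Multiplicative.toAdd, Nat.card_zmod, pow_add]
  · have := hαz ((p ^ s : ℕ) : ℤ)
    rw [zpow_natCast] at this
    rw [this, Int.cast_natCast, ZMod.natCast_self]
    simp
  · intro i
    rw [hαz, hαz, ← map_inv, ← SemidirectProduct.inl_aut]
    congr 1
    show Multiplicative.ofAdd ((u i : ZMod (p ^ s)) * (n i : ZMod (p ^ s))) = _
    congr 1
    rw [hn, hm]
    have : (u i : ZMod (p ^ s)) * (nh i : ZMod (p ^ s)) = mh i := by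
      simp only [u, Units.val_mul, mul_assoc]
      rw [IsUnit.val_inv_mul, mul_one, IsUnit.unit_spec]
    push_cast
    rw [mul_left_comm, this]
  · intro k hk
    rw [hαz, ← map_one SemidirectProduct.inl] at hk
    have := SemidirectProduct.inl_injective hk
    exact (ZMod.intCast_zmod_eq_zero_iff_dvd _ _).mp (ofAdd_eq_one.mp this)

open Classical in
/-- Abstract form of the theorem. -/
theorem resid_abstract {H : Type} [Group H] (p : ℕ) (hp : p.Prime) (s : ℕ) (r : ℕ)
    (n m : Fin r → ℤ) (σ : Fin r → ℕ) (nh mh : Fin r → ℤ)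
    (hn : ∀ i, n i = (p : ℤ) ^ (σ i) * nh i)
    (hm : ∀ i, m i = (p : ℤ) ^ (σ i) * mh i)
    (hcop : ∀ i, ¬ (p : ℤ) ∣ (nh i * mh i))
    (hdvd : ∀ i, (p : ℤ) ∣ (mh i - nh i))
    (a : H) (t : Fin r → H) (ha : a ^ (p ^ s) = 1)
    (hta : ∀ i, t i * a ^ n i * (t i)⁻¹ = a ^ m i)
    (hU : ∀ (Q : Type) [Group Q] (α : Q) (τ : Fin r → Q), α ^ (p ^ s) = 1 →
      (∀ i, τ i * α ^ n i * (τ i)⁻¹ = α ^ m i) →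
      ∃ f : H →* Q, f a = α ∧ ∀ i, f (t i) = τ i)
    (hgen : Subgroup.closure ({a} ∪ Set.range t) = ⊤) (g : H) (hg : g ≠ 1) :
    ∃ (Q : Type) (_ : Group Q) (f : H →* Q), Finite Q ∧ IsPGroup p Q ∧ f g ≠ 1 := by
  have : Fact p.Prime := ⟨hp⟩
  set A := Subgroup.zpowers a with hAdef
  let B : Fin r → Subgroup H := fun i => Subgroup.zpowers (a ^ n i)
  have hnB : ∀ {G : Type} [Group G] (b : G), b ^ (p ^ s) = 1 → ∀ i,
      Subgroup.zpowers (b ^ n i) = Subgroup.zpowers (b ^ m i) := by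
    intro G _ b hb i
    rw [hn, hm, zpowers_factor hp b hb _ _ fun h => hcop i (h.mul_right _),
      zpowers_factor hp b hb _ _ fun h => hcop i (h.mul_left _)]
  have hBA : ∀ i, B i ≤ A := by
    intro i
    rw [Subgroup.zpowers_le]
    exact Subgroup.zpow_mem_zpowers _ _
  have hB1 : ∀ i, ∀ x ∈ B i, t i * x * (t i)⁻¹ ∈ B i := by
    rintro i _ ⟨k, rfl⟩
    show t i * (a ^ n i) ^ k * (t i)⁻¹ ∈ Subgroup.zpowers (a ^ n i)
    rw [← conj_zpow, hta, hnB a ha i]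
    exact Subgroup.zpow_mem_zpowers _ _
  have hB2 : ∀ i, ∀ x ∈ B i, (t i)⁻¹ * x * t i ∈ B i := by
    intro i x hx
    have hx' : x ∈ Subgroup.zpowers (a ^ m i) := by rw [← hnB a ha i]; exact hx
    obtain ⟨k, rfl⟩ := hx'
    refine ⟨k, ?_⟩
    show (a ^ n i) ^ k = (t i)⁻¹ * (a ^ m i) ^ k * t i
    rw [← hta, conj_zpow]
    group
  have hall : ∀ g : H, ∃ k, HW A t k g := by
    intro g
    have hgm : g ∈ Subgroup.closure ({a} ∪ Set.range t) := by rw [hgen]; trivial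
    induction hgm using Subgroup.closure_induction with
    | mem x hx =>
      rcases hx with hx | ⟨i, rfl⟩
      · rw [Set.mem_singleton_iff] at hx
        subst hx
        exact ⟨0, HW.base 0 _ (Subgroup.mem_zpowers _)⟩
      · exact ⟨1, HW.tpos i⟩
    | one => exact ⟨0, HW.base 0 1 A.one_mem⟩
    | mul x y _ _ hx hy =>
      obtain ⟨k, hk⟩ := hx
      obtain ⟨l, hl⟩ := hy
      exact ⟨_, hk.mul hl⟩
    | inv x _ hx =>
      obtain ⟨k, hk⟩ := hx
      exact ⟨k, hk.inv⟩
  have tower : ∀ k : ℕ, ∃ (Q : Type) (_ : Group Q) (f : H →* Q), Finite Q ∧ IsPGroup p Q ∧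
      (∀ x ∈ A, f x = 1 → x = 1) ∧ ∀ g, HW A t k g → f g ∈ A.map f → g ∈ A := by
    intro k
    induction k with
    | zero =>
      obtain ⟨Q, _, α, τ, hfin, hpg, h1, h2, h3⟩ :=
        base_quotient hp s r n m σ nh mh hn hm hcop hdvd
      obtain ⟨f, hfa, -⟩ := hU Q α τ h1 h2
      refine ⟨Q, _, f, hfin, hpg, ?_, fun g hg _ => hg.zero⟩
      rintro _ ⟨k, rfl⟩ hk
      simp only [map_zpow, hfa] at hk
      obtain ⟨c, rfl⟩ := h3 k hk
      show a ^ _ = 1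
      rw [zpow_mul, zpow_natCast, ha, one_zpow]
    | succ k ih =>
      obtain ⟨Q, _, f, hfin, hpg, hinj, hk⟩ := ih
      let D := Multiplicative (ZMod p)
      let d : D := Multiplicative.ofAdd 1
      have hd : d ≠ 1 := fun h => one_ne_zero (ofAdd_eq_one.mp h)
      let τ : Fin r → RegularWreathProduct (Fin r → D) Q := fun i =>
        ⟨fun x j => if j = i ∧ x ∈ (B i).map f then d else 1, f (t i)⟩
      obtain ⟨f', hfa, hft⟩ := hU (RegularWreathProduct (Fin r → D) Q)
        (RegularWreathProduct.inl (f a)) τ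
        (by rw [← map_pow, ← map_pow, ha, map_one, map_one])
        (by
          intro i
          rw [← map_zpow, ← map_zpow, ← map_zpow, ← map_zpow, mul_inv_eq_iff_eq_mul]
          ext x j
          · simp only [RegularWreathProduct.mul_left, RegularWreathProduct.left_inl,
              RegularWreathProduct.right_inl, τ, Pi.mul_apply, Pi.one_apply, mul_one, one_mul]
            have : (f (a ^ m i))⁻¹ ∈ (B i).map f := by
              apply inv_mem
              refine ⟨_, ?_, rfl⟩
              show a ^ m i ∈ Subgroup.zpowers (a ^ n i)
              rw [hnB a ha i]
              exact Subgroup.mem_zpowers _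
            exact congrArg Multiplicative.toAdd (if_congr
              (and_congr Iff.rfl (Subgroup.mul_mem_cancel_left _ this).symm) rfl rfl)
          · simp only [RegularWreathProduct.mul_right, RegularWreathProduct.right_inl, τ]
            rw [← map_mul, ← map_mul, ← hta]
            simp)
      have hff : ∀ x, (f' x).right = f x := by
        have : RegularWreathProduct.rightHom.comp f' = f := by
          refine MonoidHom.eq_of_eqOn_dense hgen ?_
          rintro _ (hx | ⟨i, rfl⟩)
          · rw [Set.mem_singleton_iff] at hx
            subst hx
            simp [hfa]
          · simp [hft, τ]
        intro x
        exact DFunLike.congr_fun this x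
      have hA : ∀ c ∈ A, (f' c).left = 1 := by
        rintro _ ⟨k, rfl⟩
        simp only [map_zpow, hfa]
        rw [← map_zpow]
        rfl
      refine ⟨RegularWreathProduct (Fin r → D) Q, inferInstance, f', ?_, ?_, ?_, ?_⟩
      · have : Finite D := inferInstanceAs (Finite (ZMod p))
        infer_instance
      · obtain ⟨e, he⟩ := (IsPGroup.iff_card (p := p)).mp hpg
        refine IsPGroup.of_card (n := r * Nat.card Q + e) ?_
        have hD : Nat.card D = p := by
          rw [Nat.card_congr Multiplicative.toAdd, Nat.card_zmod]
        rw [RegularWreathProduct.card, Nat.card_fun, hD, Nat.card_fin, pow_add, pow_mul, ← he]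
      · intro x hx h
        exact hinj x hx (by rw [← hff, h]; rfl)
      · intro g hg hgA
        exact hw_key B hBA hB1 hB2 f f' d hd hff hA (fun i => by rw [hft]) hinj hk hg hgA
  obtain ⟨k, hk⟩ := hall g
  obtain ⟨Q, _, f, hfin, hpg, hinj, hsep⟩ := tower k
  refine ⟨Q, _, f, hfin, hpg, fun h => hg ?_⟩
  exact hinj g (hsep g hk (by rw [h]; exact one_mem _)) h


theorem stmt_10 (p : ℕ) (hp : p.Prime) (s : ℕ) (r : ℕ)
    (n m : Fin r → ℤ) (σ : Fin r → ℕ) (nh mh : Fin r → ℤ)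
    (hn : ∀ i, n i = (p : ℤ) ^ (σ i) * nh i)
    (hm : ∀ i, m i = (p : ℤ) ^ (σ i) * mh i)
    (hcop : ∀ i, ¬ (p : ℤ) ∣ (nh i * mh i))
    (hdvd : ∀ i, (p : ℤ) ∣ (mh i - nh i))
    (g : PresentedGroup
      ({w : FreeGroup (Unit ⊕ Fin r) |
          w = FreeGroup.of (Sum.inl ()) ^ (p ^ s) ∨
          ∃ i : Fin r,
            w = FreeGroup.of (Sum.inr i) * FreeGroup.of (Sum.inl ()) ^ (n i) *
              (FreeGroup.of (Sum.inr i))⁻¹ *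
              (FreeGroup.of (Sum.inl ()) ^ (m i))⁻¹}))
    (hg : g ≠ 1) :
    ∃ (Q : Type) (_ : Group Q) (f : _ →* Q), Finite Q ∧ IsPGroup p Q ∧ f g ≠ 1 := by
  refine resid_abstract p hp s r n m σ nh mh hn hm hcop hdvd
    (PresentedGroup.of (Sum.inl ())) (fun i => PresentedGroup.of (Sum.inr i)) ?_ ?_ ?_ ?_ g hg
  · have := PresentedGroup.one_of_mem (rels := {w : FreeGroup (Unit ⊕ Fin r) |
          w = FreeGroup.of (Sum.inl ()) ^ (p ^ s) ∨
          ∃ i : Fin r,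
            w = FreeGroup.of (Sum.inr i) * FreeGroup.of (Sum.inl ()) ^ (n i) *
              (FreeGroup.of (Sum.inr i))⁻¹ *
              (FreeGroup.of (Sum.inl ()) ^ (m i))⁻¹}) (Or.inl rfl)
    rw [map_pow] at this
    exact this
  · intro i
    have := PresentedGroup.one_of_mem (rels := {w : FreeGroup (Unit ⊕ Fin r) |
          w = FreeGroup.of (Sum.inl ()) ^ (p ^ s) ∨
          ∃ i : Fin r,
            w = FreeGroup.of (Sum.inr i) * FreeGroup.of (Sum.inl ()) ^ (n i) *
              (FreeGroup.of (Sum.inr i))⁻¹ *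
              (FreeGroup.of (Sum.inl ()) ^ (m i))⁻¹}) (Or.inr ⟨i, rfl⟩)
    rw [map_mul, map_inv, mul_inv_eq_one, map_mul, map_mul, map_inv, map_zpow, map_zpow] at this
    exact this
  · intro Q _ α τ h1 h2
    refine ⟨PresentedGroup.toGroup (f := Sum.elim (fun _ => α) τ) ?_, ?_, ?_⟩
    · rintro w (rfl | ⟨i, rfl⟩)
      · simp [h1]
      · simp [h2]
    · exact PresentedGroup.toGroup.of _
    · intro i
      exact PresentedGroup.toGroup.of _
  · rw [← PresentedGroup.closure_range_of]
    congr 1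
    ext x
    have hun : ∀ P : Unit → Prop, (∃ a, P a) ↔ P () := fun P => ⟨fun ⟨_, h⟩ => h, fun h => ⟨_, h⟩⟩
    simp [eq_comm, hun]
end

section
/- Let G = ⟨a, t₁,…,t_r | tᵢ a^(nᵢ) tᵢ⁻¹ = a^(mᵢ)⟩ with r ≥ 2 and nᵢ = mᵢ = p^(σᵢ) for all i (p prime, σᵢ ≥ 0). Then G is residually a finite p-group. -/
namespace Stmt19

/-- strictly upper triangular matrices, as an additive subgroup -/
def strictUpper (R : Type) [CommRing R] (n : ℕ) : AddSubgroup (Matrix (Fin n) (Fin n) R) where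
  carrier := {m | ∀ i j, j ≤ i → m i j = 0}
  zero_mem' := by intro i j _; rfl
  add_mem' := by
    intro a b ha hb i j h
    simp [ha i j h, hb i j h]
  neg_mem' := by
    intro a ha i j h
    simp [ha i j h]

theorem strictUpper_mul {R : Type} [CommRing R] {n : ℕ} {a b : Matrix (Fin n) (Fin n) R}
    (ha : a ∈ strictUpper R n) (hb : b ∈ strictUpper R n) : a * b ∈ strictUpper R n := by
  intro i j h
  rw [Matrix.mul_apply]
  refine Finset.sum_eq_zero fun k _ => ?_
  by_cases hk : k ≤ i
  · rw [ha i k hk, zero_mul]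
  · rw [hb k j (by omega), mul_zero]

theorem isUnit_one_add {R : Type} [CommRing R] {n : ℕ} {a : Matrix (Fin n) (Fin n) R}
    (ha : a ∈ strictUpper R n) : IsUnit (1 + a) := by
  rw [Matrix.isUnit_iff_isUnit_det, Matrix.det_of_upperTriangular]
  · have : ∀ i, (1 + a) i i = 1 := by intro i; simp [ha i i le_rfl]
    simp [this]
  · intro i j h
    have h' : j < i := h
    simp [ha i j h'.le, Matrix.one_apply_ne h'.ne']

/-- the unitriangular group -/
def unip (R : Type) [CommRing R] [Finite R] (n : ℕ) : Subgroup (Matrix (Fin n) (Fin n) R)ˣ :=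
  let S : Submonoid (Matrix (Fin n) (Fin n) R)ˣ :=
    { carrier := {u | (u : Matrix (Fin n) (Fin n) R) - 1 ∈ strictUpper R n}
      one_mem' := by simp [(strictUpper R n).zero_mem]
      mul_mem' := by
        intro u v hu hv
        have : ((u * v : (Matrix (Fin n) (Fin n) R)ˣ) : Matrix (Fin n) (Fin n) R) - 1 =
          (u - 1) * (v - 1) + ((u - 1) + (v - 1)) := by
            rw [Units.val_mul]; noncomm_ring
        change _ ∈ strictUpper R n
        rw [this]
        exact add_mem (strictUpper_mul hu hv) (add_mem hu hv) }
  { S with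
    inv_mem' := by
      intro u hu
      have h1 : 0 < orderOf u := orderOf_pos u
      have : u⁻¹ = u ^ (orderOf u - 1) := by
        rw [inv_eq_iff_mul_eq_one, ← pow_succ', Nat.sub_add_cancel h1, pow_orderOf_eq_one]
      rw [this]
      exact S.pow_mem hu _ }

theorem mem_unip {R : Type} [CommRing R] [Finite R] {n : ℕ} {u : (Matrix (Fin n) (Fin n) R)ˣ} :
    u ∈ unip R n ↔ (u : Matrix (Fin n) (Fin n) R) - 1 ∈ strictUpper R n := Iff.rfl

theorem unip_isPGroup (p : ℕ) (hp : p.Prime) (N n : ℕ) [NeZero (p ^ N)] :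
    IsPGroup p (unip (ZMod (p ^ N)) n) := by
  have hc : Nat.card (strictUpper (ZMod (p ^ N)) n) = Nat.card (unip (ZMod (p ^ N)) n) := by
    refine Nat.card_congr (Equiv.ofBijective
      (fun j => ⟨(isUnit_one_add j.2).unit, by rw [mem_unip]; simp⟩) ⟨?_, ?_⟩)
    · intro a b h
      have := congrArg (fun u : unip (ZMod (p ^ N)) n =>
        ((u : (Matrix (Fin n) (Fin n) (ZMod (p ^ N)))ˣ) : Matrix (Fin n) (Fin n) (ZMod (p ^ N)))) h
      simpa using this
    · rintro ⟨u, hu⟩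
      refine ⟨⟨_, mem_unip.1 hu⟩, ?_⟩
      ext1
      ext1
      simp
  have hd := AddSubgroup.card_addSubgroup_dvd_card (strictUpper (ZMod (p ^ N)) n)
  rw [hc] at hd
  have : Nat.card (Matrix (Fin n) (Fin n) (ZMod (p ^ N))) = p ^ (N * (n * n)) := by
    unfold Matrix
    rw [Nat.card_fun, Nat.card_fun]
    simp [← pow_mul, mul_assoc]
  rw [this] at hd
  exact IsPGroup.of_card_dvd_pow hd

/-- step matrix: letter `s` of the word `L` -/
def stepMat (R : Type) [CommRing R] {S : Type} [DecidableEq S] (n : ℕ) (L : ℕ → S) (s : S) :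
    Matrix (Fin n) (Fin n) R :=
  Matrix.of fun a b => if (b : ℕ) = a + 1 ∧ L a = s then 1 else 0

theorem stepMat_mem (R : Type) [CommRing R] {S : Type} [DecidableEq S] (n : ℕ) (L : ℕ → S)
    (s : S) : stepMat R n L s ∈ strictUpper R n := by
  intro i j h
  simp only [stepMat, Matrix.of_apply]
  rw [if_neg]
  rintro ⟨h1, _⟩
  have : (j : ℕ) ≤ i := h
  omega

theorem stepMat_sq (R : Type) [CommRing R] {S : Type} [DecidableEq S] (n : ℕ) (L : ℕ → S)
    (hL : ∀ k, k + 2 < n → L k ≠ L (k + 1)) (s : S) :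
    stepMat R n L s * stepMat R n L s = 0 := by
  ext i j
  rw [Matrix.mul_apply]
  refine Finset.sum_eq_zero fun k _ => ?_
  simp only [stepMat, Matrix.of_apply]
  by_cases h1 : (k : ℕ) = i + 1 ∧ L i = s
  · rw [if_neg (c := (j : ℕ) = k + 1 ∧ L k = s), mul_zero]
    rintro ⟨h2, h3⟩
    refine hL i (by omega) ?_
    rw [h1.2, ← h1.1, h3]
  · rw [if_neg h1, zero_mul]

/-- `1 + e y` as a homomorphism in `e`. -/
def expHom {A : Type} [Ring A] (y : A) (hy : y * y = 0) : Multiplicative ℤ →* A where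
  toFun e := 1 + (e.toAdd : ℤ) • y
  map_one' := by simp
  map_mul' a b := by
    rw [toAdd_mul, add_smul, add_mul, mul_add, mul_add, smul_mul_smul_comm, hy]
    simp only [mul_one, one_mul, smul_zero, add_zero]
    abel

/-- homomorphism from the free product -/
def repHom (R : Type) [CommRing R] [Finite R] {S : Type} [DecidableEq S] (n : ℕ) (L : ℕ → S)
    (hL : ∀ k, k + 2 < n → L k ≠ L (k + 1)) :
    Monoid.CoprodI (fun _ : S => Multiplicative ℤ) →* unip R n :=
  Monoid.CoprodI.lift fun s =>
    (expHom _ (stepMat_sq R n L hL s)).toHomUnits.codRestrict (unip R n) (by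
      intro e
      rw [mem_unip]
      simpa [expHom] using zsmul_mem (stepMat_mem R n L s) _)

theorem repHom_of (R : Type) [CommRing R] [Finite R] {S : Type} [DecidableEq S] (n : ℕ)
    (L : ℕ → S) (hL : ∀ k, k + 2 < n → L k ≠ L (k + 1)) (s : S) (e : Multiplicative ℤ) :
    ((repHom R n L hL (Monoid.CoprodI.of (i := s) e) : (Matrix (Fin n) (Fin n) R)ˣ) :
      Matrix (Fin n) (Fin n) R) = 1 + (e.toAdd : ℤ) • stepMat R n L s := by
  simp [repHom, expHom]

/-- key computation -/
theorem key (R : Type) [CommRing R] {S : Type} [DecidableEq S] (n : ℕ) (L : ℕ → S) (e : ℕ → ℤ)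
    (l : ℕ) (hl : l ≤ n) :
    (∀ b : Fin (n + 1), l < b →
      ((List.range l).map fun k => 1 + e k • stepMat R (n + 1) L (L k)).prod 0 b = 0) ∧
    ((List.range l).map fun k => 1 + e k • stepMat R (n + 1) L (L k)).prod 0 ⟨l, by omega⟩ =
      ((∏ k ∈ Finset.range l, e k : ℤ) : R) := by
  induction l with
  | zero =>
    refine ⟨?_, ?_⟩
    · intro b hb
      simp only [List.range_zero, List.map_nil, List.prod_nil]
      apply Matrix.one_apply_ne
      rintro rfl
      simp at hb
    · simp
  | succ l ih =>
    obtain ⟨h1, h2⟩ := ih (by omega)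
    rw [List.range_succ, List.map_append, List.prod_append]
    simp only [List.map_cons, List.map_nil, List.prod_singleton]
    set M := ((List.range l).map fun k => 1 + e k • stepMat R (n + 1) L (L k)).prod
    rw [mul_add, mul_one, mul_smul_comm]
    simp only [Matrix.add_apply, Matrix.smul_apply, Matrix.mul_apply]
    refine ⟨?_, ?_⟩
    · intro b hb
      rw [h1 b (by omega), Finset.sum_eq_zero, smul_zero, add_zero]
      intro a _
      by_cases ha : l < (a : ℕ)
      · rw [h1 a ha, zero_mul]
      · simp only [stepMat, Matrix.of_apply]
        rw [if_neg (by omega), mul_zero]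
    · rw [h1 _ (by simp), Finset.sum_eq_single ⟨l, by omega⟩]
      · rw [h2, Finset.prod_range_succ]
        simp [stepMat, mul_comm]
      · intro a _ ha
        have : (a : ℕ) ≠ l := fun h => ha (Fin.ext h)
        simp only [stepMat, Matrix.of_apply]
        rw [if_neg (by omega), mul_zero]
      · simp

theorem coprod_res (p : ℕ) (hp : p.Prime) (S : Type) (w : Monoid.CoprodI
    (fun _ : S => Multiplicative ℤ)) (hw : w ≠ 1) :
    ∃ (Q : Type) (_ : Group Q) (f : Monoid.CoprodI (fun _ : S => Multiplicative ℤ) →* Q),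
      Finite Q ∧ IsPGroup p Q ∧ f w ≠ 1 := by
  classical
  obtain ⟨W, rfl⟩ := Monoid.CoprodI.Word.equiv.symm.surjective w
  change W.prod ≠ 1 at hw
  change ∃ (Q : Type) (_ : Group Q) (f : Monoid.CoprodI (fun _ : S => Multiplicative ℤ) →* Q),
      Finite Q ∧ IsPGroup p Q ∧ f W.prod ≠ 1
  have hne : W.toList ≠ [] := by
    intro h
    apply hw
    simp [Monoid.CoprodI.Word.prod, h]
  set n := W.toList.length with hn
  have hn0 : 0 < n := List.length_pos_iff.2 hne
  let d := W.toList.head hne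
  let L : ℕ → S := fun k => (W.toList.getD k d).1
  let e : ℕ → ℤ := fun k => Multiplicative.toAdd (W.toList.getD k d).2
  have hL : ∀ k, k + 2 < n + 1 → L k ≠ L (k + 1) := by
    intro k hk
    have := List.isChain_iff_getElem.1 W.chain_ne k (by omega)
    simp only [L]
    rw [List.getD_eq_getElem _ _ (by omega), List.getD_eq_getElem _ _ (by omega)]
    exact this
  have he : ∀ k < n, e k ≠ 0 := by
    intro k hk h
    simp only [e] at h
    rw [List.getD_eq_getElem _ _ (by omega)] at h
    exact W.ne_one _ (List.getElem_mem (by omega)) h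
  set E := ∏ k ∈ Finset.range n, e k with hE
  have hE0 : E ≠ 0 := Finset.prod_ne_zero_iff.2 fun k hk => he k (Finset.mem_range.1 hk)
  set N := E.natAbs
  have hNlt : N < p ^ N := Nat.lt_pow_self hp.one_lt
  haveI : NeZero (p ^ N) := ⟨by positivity [hp.pos]⟩
  refine ⟨unip (ZMod (p ^ N)) (n + 1), inferInstance, repHom (ZMod (p ^ N)) (n + 1) L hL,
    inferInstance, unip_isPGroup p hp N _, ?_⟩
  intro h
  have hlist : W.toList = (List.range n).map fun k => W.toList.getD k d := by
    apply List.ext_getElem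
    · simp [hn]
    · intro i h1 h2
      simp [h1]
  have hprod : W.prod = ((List.range n).map fun k =>
      (Monoid.CoprodI.of (M := fun _ : S => Multiplicative ℤ) (i := L k)
        (Multiplicative.ofAdd (e k)))).prod := by
    unfold Monoid.CoprodI.Word.prod
    conv_lhs => rw [hlist]
    rw [List.map_map]
    rfl
  have h3 := congrArg (fun u : unip (ZMod (p ^ N)) (n + 1) =>
    ((u : (Matrix (Fin (n + 1)) (Fin (n + 1)) (ZMod (p ^ N)))ˣ) :
      Matrix (Fin (n + 1)) (Fin (n + 1)) (ZMod (p ^ N)))) h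
  have h4 : ∀ l : List ℕ, ((repHom (ZMod (p ^ N)) (n + 1) L hL ((l.map fun k =>
      (Monoid.CoprodI.of (M := fun _ : S => Multiplicative ℤ) (i := L k)
        (Multiplicative.ofAdd (e k)))).prod) :
      (Matrix (Fin (n + 1)) (Fin (n + 1)) (ZMod (p ^ N)))ˣ) :
      Matrix (Fin (n + 1)) (Fin (n + 1)) (ZMod (p ^ N))) =
      (l.map fun k => 1 + e k • stepMat (ZMod (p ^ N)) (n + 1) L (L k)).prod := by
    intro l
    induction l with
    | nil => simp
    | cons a l ih =>
      simp only [List.map_cons, List.prod_cons, map_mul, Subgroup.coe_mul, Units.val_mul, ih]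
      rw [repHom_of]
      rfl
  have h5 := (key (ZMod (p ^ N)) n L e n le_rfl).2
  rw [← h4, ← hprod] at h5
  rw [h3] at h5
  rw [Subgroup.coe_one, Units.val_one, Matrix.one_apply_ne, ← hE] at h5
  · have h6 := (ZMod.intCast_zmod_eq_zero_iff_dvd E (p ^ N)).1 h5.symm
    have h7 := Int.natAbs_dvd_natAbs.2 h6
    rw [Int.natAbs_natCast] at h7
    have := Nat.le_of_dvd (Int.natAbs_pos.2 hE0) h7
    omega
  · intro h
    have := congrArg Fin.val h
    simp at this
    omega

theorem free_res (p : ℕ) (hp : p.Prime) (S : Type) (w : FreeGroup S) (hw : w ≠ 1) :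
    ∃ (Q : Type) (_ : Group Q) (f : FreeGroup S →* Q),
      Finite Q ∧ IsPGroup p Q ∧ f w ≠ 1 := by
  let A : FreeGroup S →* Monoid.CoprodI (fun _ : S => Multiplicative ℤ) :=
    FreeGroup.lift fun s => Monoid.CoprodI.of (i := s) (Multiplicative.ofAdd 1)
  let B : Monoid.CoprodI (fun _ : S => Multiplicative ℤ) →* FreeGroup S :=
    Monoid.CoprodI.lift fun s => zpowersHom _ (FreeGroup.of s)
  have hBA : B.comp A = MonoidHom.id _ := by
    ext s
    simp [A, B]
  have hA : A w ≠ 1 := by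
    intro h
    apply hw
    have := DFunLike.congr_fun hBA w
    simpa [h] using this.symm
  obtain ⟨Q, _, f, h1, h2, h3⟩ := coprod_res p hp S (A w) hA
  exact ⟨Q, _, f.comp A, h1, h2, h3⟩

/-- map into a wreath product -/
def wreathMap {F C Z P : Type} [Group F] [Group C] [Group Z] [Group P] (α : C →* MulAut F)
    (π : Z →* C) (φ : F →* P) : F ⋊[α.comp π] Z →* RegularWreathProduct P C where
  toFun x := ⟨fun d => φ (α d⁻¹ x.left), π x.right⟩
  map_one' := by
    ext <;> simp
  map_mul' x y := by
    ext d
    · have : α (d⁻¹ * π x.right) y.left = α d⁻¹ (α (π x.right) y.left) := by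
        rw [map_mul]; rfl
      simp only [SemidirectProduct.mul_left, RegularWreathProduct.mul_left, Pi.mul_apply,
        mul_inv_rev, inv_inv, map_mul α, MonoidHom.comp_apply, map_mul φ,
        MulAut.mul_apply, map_mul (α d⁻¹)]
    · simp

/-- the shift action -/
def shift {r : ℕ} (q : Fin r → ℕ) (m : ℕ) (h : ∀ i, q i ∣ m) :
    Multiplicative (ZMod m) →* MulAut (FreeGroup (Σ i, ZMod (q i))) where
  toFun d := FreeGroup.freeGroupCongr
    { toFun := fun s => ⟨s.1, s.2 + ZMod.castHom (h s.1) _ d.toAdd⟩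
      invFun := fun s => ⟨s.1, s.2 - ZMod.castHom (h s.1) _ d.toAdd⟩
      left_inv := by intro s; simp
      right_inv := by intro s; simp }
  map_one' := by
    apply MulEquiv.toMonoidHom_injective
    ext s
    simp
  map_mul' a b := by
    apply MulEquiv.toMonoidHom_injective
    ext s
    have := map_add (ZMod.castHom (h s.1) (ZMod (q s.1))) a.toAdd b.toAdd
    simp only [ZMod.castHom_apply] at this
    simp [this, add_comm, add_left_comm]

theorem conj_pow_eq {G : Type} [Group G] (a t : G) (q : ℕ) (h : Commute t (a ^ q)) (m n : ℤ)
    (hmn : (m : ZMod q) = n) : a ^ m * t * a ^ (-m) = a ^ n * t * a ^ (-n) := by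
  obtain ⟨c, hc⟩ := (ZMod.intCast_eq_intCast_iff_dvd_sub m n q).1 hmn
  have hn : n = m + q * c := by linarith
  have h2 : Commute t (a ^ ((q : ℤ) * c)) := by
    rw [zpow_mul, zpow_natCast]; exact h.zpow_right c
  subst hn
  rw [neg_add, zpow_add, mul_assoc (a ^ m) _ t, ← h2.eq, add_comm (-m), zpow_add]
  simp [mul_assoc]

/-- the relations -/
abbrev Rels (p r : ℕ) (σ : Fin r → ℕ) : Set (FreeGroup (Unit ⊕ Fin r)) :=
  {w : FreeGroup (Unit ⊕ Fin r) |
          ∃ i : Fin r,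
            w = FreeGroup.of (Sum.inr i) * FreeGroup.of (Sum.inl ()) ^ (p ^ σ i) *
              (FreeGroup.of (Sum.inr i))⁻¹ *
              (FreeGroup.of (Sum.inl ()) ^ (p ^ σ i))⁻¹}

theorem main (p : ℕ) (hp : p.Prime) (r : ℕ) (σ : Fin r → ℕ)
    (g : PresentedGroup (Rels p r σ)) (hg : g ≠ 1) :
    ∃ (Q : Type) (_ : Group Q) (f : PresentedGroup (Rels p r σ) →* Q),
      Finite Q ∧ IsPGroup p Q ∧ f g ≠ 1 := by
  classical
  haveI : Fact p.Prime := ⟨hp⟩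
  have hpos : ∀ k, 0 < p ^ k := fun k => pow_pos hp.pos k
  haveI hnz : ∀ k, NeZero (p ^ k) := fun k => ⟨(hpos k).ne'⟩
  let M := ∑ i, σ i
  have hdvd : ∀ i, p ^ σ i ∣ p ^ M := fun i =>
    pow_dvd_pow p (Finset.single_le_sum (f := σ) (fun _ _ => Nat.zero_le _) (Finset.mem_univ i))
  let α := shift (fun i => p ^ σ i) (p ^ M) hdvd
  let π : Multiplicative ℤ →* Multiplicative (ZMod (p ^ M)) :=
    AddMonoidHom.toMultiplicative (Int.castAddHom (ZMod (p ^ M)))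
  have hα : ∀ (k : Multiplicative ℤ) (i : Fin r) (c : ZMod (p ^ σ i)),
      α (π k) (FreeGroup.of ⟨i, c⟩) = FreeGroup.of ⟨i, c + ((k.toAdd : ℤ) : ZMod (p ^ σ i))⟩ := by
    intro k i c
    have := map_intCast (ZMod.castHom (hdvd i) (ZMod (p ^ σ i))) k.toAdd
    simp only [ZMod.castHom_apply] at this
    simp [α, π, shift, this]
  let gen : Unit ⊕ Fin r → FreeGroup (Σ i, ZMod (p ^ σ i)) ⋊[α.comp π] Multiplicative ℤ := Sum.elim
    (fun _ => SemidirectProduct.inr (Multiplicative.ofAdd 1))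
    (fun i => SemidirectProduct.inl (FreeGroup.of ⟨i, 0⟩))
  have hgen : ∀ w ∈ (Rels p r σ), FreeGroup.lift gen w = 1 := by
    rintro w ⟨i, rfl⟩
    simp only [map_mul, map_pow, map_inv, FreeGroup.lift_apply_of, gen, Sum.elim_inl, Sum.elim_inr]
    rw [mul_inv_eq_one, mul_inv_eq_iff_eq_mul, ← map_pow]
    generalize hz : (Multiplicative.ofAdd (1 : ℤ)) ^ (p ^ σ i) = z
    have hz' : ((z.toAdd : ℤ) : ZMod (p ^ σ i)) = 0 := by
      rw [← hz, toAdd_pow, toAdd_ofAdd, nsmul_eq_mul, mul_one, Int.cast_natCast,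
        ZMod.natCast_self]
    ext
    · simp [hα, hz']
    · simp
  let ψ : PresentedGroup (Rels p r σ) →* FreeGroup (Σ i, ZMod (p ^ σ i)) ⋊[α.comp π] Multiplicative ℤ := PresentedGroup.toGroup hgen
  let a : PresentedGroup (Rels p r σ) := PresentedGroup.of (Sum.inl ())
  let t : Fin r → PresentedGroup (Rels p r σ) := fun i => PresentedGroup.of (Sum.inr i)
  have hcomm : ∀ i, Commute (t i) (a ^ (p ^ σ i)) := by
    intro i
    have : PresentedGroup.mk (Rels p r σ) (FreeGroup.of (Sum.inr i) *
        FreeGroup.of (Sum.inl ()) ^ (p ^ σ i) * (FreeGroup.of (Sum.inr i))⁻¹ *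
              (FreeGroup.of (Sum.inl ()) ^ (p ^ σ i))⁻¹) = 1 :=
      PresentedGroup.one_of_mem ⟨i, rfl⟩
    simp only [map_mul, map_pow, map_inv] at this
    rw [mul_inv_eq_one, mul_inv_eq_iff_eq_mul] at this
    exact this
  let χ : FreeGroup (Σ i, ZMod (p ^ σ i)) ⋊[α.comp π] Multiplicative ℤ →* PresentedGroup (Rels p r σ) := SemidirectProduct.lift
    (FreeGroup.lift fun s => a ^ (s.2.val : ℤ) * t s.1 * a ^ (-(s.2.val : ℤ)))
    (zpowersHom _ a) (by
      intro k
      ext ⟨i, c⟩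
      simp only [MonoidHom.comp_apply, MulEquiv.coe_toMonoidHom, hα, FreeGroup.lift_apply_of,
        MulAut.conj_apply, zpowersHom_apply]
      rw [conj_pow_eq a (t i) _ (hcomm i) _ (k.toAdd + c.val)]
      · rw [neg_add_rev, zpow_add, zpow_add, zpow_neg a k.toAdd]
        simp only [mul_assoc]
      · simp [add_comm])
  have hχψ : χ.comp ψ = MonoidHom.id _ := by
    apply PresentedGroup.ext
    rintro (⟨⟩ | i)
    · simp [χ, ψ, gen, a]
    · simp [χ, ψ, gen, t]
  have hψ : ψ g ≠ 1 := by
    intro h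
    apply hg
    have := DFunLike.congr_fun hχψ g
    simpa [h] using this.symm
  by_cases hr : (ψ g).right = 1
  · have hl : (ψ g).left ≠ 1 := fun h => hψ (SemidirectProduct.ext h hr)
    obtain ⟨P, _, φ, hfin, hP, hφ⟩ := free_res p hp _ _ hl
    refine ⟨RegularWreathProduct P (Multiplicative (ZMod (p ^ M))), inferInstance,
      (wreathMap α π φ).comp ψ, ?_, ?_, ?_⟩
    · infer_instance
    · obtain ⟨n, hn⟩ := IsPGroup.iff_card.1 hP
      apply IsPGroup.of_card (n := n * p ^ M + M)
      rw [RegularWreathProduct.card, hn, Nat.card_congr Multiplicative.toAdd, Nat.card_zmod,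
        pow_add, pow_mul]
    · intro h
      apply hφ
      have := congrArg (fun x => RegularWreathProduct.left x 1) h
      simp only [wreathMap, MonoidHom.comp_apply, MonoidHom.coe_mk, OneHom.coe_mk, inv_one,
        map_one, MulAut.one_apply, RegularWreathProduct.one_left, Pi.one_apply] at this
      exact this
  · set k : ℤ := Multiplicative.toAdd (ψ g).right with hk
    have hk0 : k ≠ 0 := fun h => hr h
    set N := k.natAbs
    have hNlt : N < p ^ N := Nat.lt_pow_self hp.one_lt
    refine ⟨Multiplicative (ZMod (p ^ N)), inferInstance,
      ((AddMonoidHom.toMultiplicative (Int.castAddHom (ZMod (p ^ N)))).comp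
        SemidirectProduct.rightHom).comp ψ, inferInstance, ?_, ?_⟩
    · apply IsPGroup.of_card (n := N)
      rw [Nat.card_congr Multiplicative.toAdd, Nat.card_zmod]
    · intro h
      have h5 : ((k : ℤ) : ZMod (p ^ N)) = 0 := h
      have h6 := (ZMod.intCast_zmod_eq_zero_iff_dvd k (p ^ N)).1 h5
      have h7 := Int.natAbs_dvd_natAbs.2 h6
      rw [Int.natAbs_natCast] at h7
      have := Nat.le_of_dvd (Int.natAbs_pos.2 hk0) h7
      omega

end Stmt19

/-- `G = ⟨a, t₁,…,t_r | tᵢ a^(p^σᵢ) tᵢ⁻¹ = a^(p^σᵢ)⟩`; generator `Sum.inl ()` is `a`,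
generator `Sum.inr i` is `tᵢ`. -/
theorem stmt_19 (p : ℕ) (hp : p.Prime) (r : ℕ) (hr : 2 ≤ r) (σ : Fin r → ℕ)
    (g : PresentedGroup
      ({w : FreeGroup (Unit ⊕ Fin r) |
          ∃ i : Fin r,
            w = FreeGroup.of (Sum.inr i) * FreeGroup.of (Sum.inl ()) ^ (p ^ σ i) *
              (FreeGroup.of (Sum.inr i))⁻¹ *
              (FreeGroup.of (Sum.inl ()) ^ (p ^ σ i))⁻¹}))
    (hg : g ≠ 1) :
    ∃ (Q : Type) (_ : Group Q) (f : _ →* Q), Finite Q ∧ IsPGroup p Q ∧ f g ≠ 1 := by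
  exact Stmt19.main p hp r σ g hg
end
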